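/- Under hypotheses (H1), (H2) and the periodicity of Ã_ε and C̃_ε in τ and θ, for any ν > 0 there exists a unique S^ν = S^ν(t,τ,θ,x) ∈ L²(ℝ×𝕋²), periodic of period 1 in θ, solving ∂S^ν/∂θ − ∇·((Ã_ε(t,τ,·,·)+ν)∇S^ν) = ∇·C̃_ε(t,τ,·,·) subject to the constraint sup_θ |∫_{𝕋²} S^ν(θ,x) dx| = 0. Moreover there is a constant γ₃, depending only on γ and ν, such that ‖∂S^ν/∂θ‖_{L²_#(ℝ×𝕋²)} ≤ γ₃, ‖∇S^ν‖_{L^∞_#(ℝ,L²(𝕋²))} ≤ γ₃, ‖S^ν‖_{L^∞_#(ℝ,L²(𝕋²))} ≤ γ₃, ‖∂S^ν/∂t‖_{L^∞_#(ℝ,L²(𝕋²))} ≤ γ₃ and ‖∂S^ν/∂τ‖_{L^∞_#(ℝ,L²(𝕋²))} ≤ √ε γ₃. -/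

import Mathlib

open MeasureTheory Filter

noncomputable section

/-- Fundamental domain of the two-dimensional torus `𝕋² = ℝ²/ℤ²`. -/
def Tsq : Set (ℝ × ℝ) := Set.Icc (0:ℝ) 1 ×ˢ Set.Icc (0:ℝ) 1

/-- Periodicity of period 1 in each space direction: a function on `ℝ²`
defining a function on the torus `𝕋²`. -/
def SpacePeriodic {E : Type*} (f : (ℝ × ℝ) → E) : Prop :=
  ∀ x : ℝ × ℝ, f (x + (1, 0)) = f x ∧ f (x + (0, 1)) = f x

/-- Gradient of a scalar function on `ℝ²`. -/
def grad (f : (ℝ × ℝ) → ℝ) (x : ℝ × ℝ) : ℝ × ℝ :=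
  (fderiv ℝ f x (1, 0), fderiv ℝ f x (0, 1))

/-- Divergence of a vector field on `ℝ²`. -/
def div2 (F : (ℝ × ℝ) → ℝ × ℝ) (x : ℝ × ℝ) : ℝ :=
  fderiv ℝ (fun y => (F y).1) x (1, 0) + fderiv ℝ (fun y => (F y).2) x (0, 1)

/-- Laplacian of a scalar function on `ℝ²`. -/
def lap (f : (ℝ × ℝ) → ℝ) (x : ℝ × ℝ) : ℝ := div2 (grad f) x

/-- `L²(𝕋²)` norm of a scalar function. -/
def L2norm (f : (ℝ × ℝ) → ℝ) : ℝ := (∫ x in Tsq, (f x) ^ 2) ^ (1/2 : ℝ)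

/-- `L^∞(𝕋²)` norm of a (bounded) function. -/
def LinfNorm (f : (ℝ × ℝ) → ℝ) : ℝ := ⨆ x : ℝ × ℝ, |f x|

/-- `L²_#(ℝ×𝕋²)` norm : `(∫₀¹ ∫_{𝕋²} f² dx dθ)^{1/2}` for functions
1-periodic in `θ`. -/
def L2sharpNorm (f : ℝ → (ℝ × ℝ) → ℝ) : ℝ :=
  (∫ θ in Set.Icc (0:ℝ) 1, ∫ x in Tsq, (f θ x) ^ 2) ^ (1/2 : ℝ)

/-- `L^∞_#(ℝ, L²(𝕋²))` norm : `sup_{θ ∈ [0,1]} ‖f(θ,·)‖_{L²(𝕋²)}`. -/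
def LinfL2Norm (f : ℝ → (ℝ × ℝ) → ℝ) : ℝ :=
  ⨆ θ : Set.Icc (0:ℝ) 1, L2norm (f θ.1)

/-- Regular nonnegative scalar coefficient `Ã_ε(t,τ,θ,x)` and regular vector field
`C̃_ε(t,τ,θ,x)`, 1-periodic in `τ` and in `θ` (and in space), together with the
bounds (H1) and (H2) with constant `γ`. -/
def CoeffBasic (γ ε : ℝ)
    (A : ℝ → ℝ → ℝ → (ℝ × ℝ) → ℝ) (C : ℝ → ℝ → ℝ → (ℝ × ℝ) → ℝ × ℝ) : Prop :=
  ContDiff ℝ (⊤ : ℕ∞) (fun p : ℝ × ℝ × ℝ × (ℝ × ℝ) => A p.1 p.2.1 p.2.2.1 p.2.2.2) ∧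
  ContDiff ℝ (⊤ : ℕ∞) (fun p : ℝ × ℝ × ℝ × (ℝ × ℝ) => C p.1 p.2.1 p.2.2.1 p.2.2.2) ∧
  (∀ t τ θ x, 0 ≤ A t τ θ x) ∧
  (∀ t τ θ x, A t (τ + 1) θ x = A t τ θ x ∧ A t τ (θ + 1) x = A t τ θ x ∧
      C t (τ + 1) θ x = C t τ θ x ∧ C t τ (θ + 1) x = C t τ θ x) ∧
  (∀ t τ θ, SpacePeriodic (A t τ θ) ∧ SpacePeriodic (C t τ θ)) ∧
  -- (H1)
  (∀ t τ θ x,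
    |A t τ θ x| ≤ γ ∧ ‖C t τ θ x‖ ≤ γ ∧
    |deriv (fun s => A s τ θ x) t| ≤ γ ∧ ‖deriv (fun s => C s τ θ x) t‖ ≤ γ ∧
    |deriv (fun σ => A t τ σ x) θ| ≤ γ ∧ ‖deriv (fun σ => C t τ σ x) θ‖ ≤ γ ∧
    ‖grad (A t τ θ) x‖ ≤ γ ∧ |div2 (C t τ θ) x| ≤ γ ∧
    ‖deriv (fun s => grad (A s τ θ) x) t‖ ≤ γ ∧
    |deriv (fun s => div2 (C s τ θ) x) t| ≤ γ) ∧
  -- (H2)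
  (∀ t τ θ x,
    |deriv (fun s => A t s θ x) τ| ≤ Real.sqrt ε * γ ∧
    ‖deriv (fun s => C t s θ x) τ‖ ≤ Real.sqrt ε * γ ∧
    ‖deriv (fun s => grad (A t s θ) x) τ‖ ≤ Real.sqrt ε * γ)

/-- The threshold hypotheses (H3), (H4) and (H5). -/
def CoeffThreshold (γ Gthr θa θw ε : ℝ)
    (A : ℝ → ℝ → ℝ → (ℝ × ℝ) → ℝ) (C : ℝ → ℝ → ℝ → (ℝ × ℝ) → ℝ × ℝ) : Prop :=
  -- (H3)
  (0 < Gthr ∧ θa < θw ∧ θa ∈ Set.Icc (0:ℝ) 1 ∧ θw ∈ Set.Icc (0:ℝ) 1 ∧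
    ∀ t τ : ℝ, ∀ x : ℝ × ℝ, ∀ θ ∈ Set.Icc θa θw, Gthr ≤ A t τ θ x) ∧
  -- (H4)
  (∀ t τ θ x, A t τ θ x ≤ Gthr →
    deriv (fun s => A s τ θ x) t = 0 ∧ deriv (fun s => A t s θ x) τ = 0 ∧
    grad (A t τ θ) x = 0 ∧
    deriv (fun s => C s τ θ x) t = 0 ∧ deriv (fun s => C t s θ x) τ = 0 ∧
    div2 (C t τ θ) x = 0) ∧
  -- (H5)
  (∀ t τ θ x,
    ‖C t τ θ x‖ ≤ γ * A t τ θ x ∧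
    ‖C t τ θ x‖ ^ 2 ≤ γ * A t τ θ x ∧
    ‖grad (A t τ θ) x‖ ≤ γ * A t τ θ x ∧
    |deriv (fun s => A s τ θ x) t| ≤ γ * A t τ θ x ∧
    ‖deriv (fun s => grad (A s τ θ) x) t‖ ^ 2 ≤ γ * A t τ θ x ∧
    |deriv (fun s => A t s θ x) τ| ^ 2 ≤ ε * γ * A t τ θ x ∧
    ‖deriv (fun s => grad (A t s θ) x) τ‖ ^ 2 ≤ ε * γ * A t τ θ x ∧
    |div2 (C t τ θ) x| ≤ γ * A t τ θ x ∧
    ‖deriv (fun s => C s τ θ x) t‖ ≤ γ * A t τ θ x ∧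
    ‖deriv (fun s => C s τ θ x) t‖ ^ 2 ≤ γ ^ 2 * A t τ θ x)

/-- `S(t,τ,·,·)` is, for all values of the parameters `t` and `τ`, a classical
solution, 1-periodic in `θ`, of the regularized cell problem
`μ S + ∂S/∂θ − ∇·((Ã_ε(t,τ,·,·) + ν)∇S) = ∇·C̃_ε(t,τ,·,·)`,
depending regularly on `t` and `τ`. -/
def IsRegCellSolP (A : ℝ → ℝ → ℝ → (ℝ × ℝ) → ℝ) (C : ℝ → ℝ → ℝ → (ℝ × ℝ) → ℝ × ℝ)
    (μ ν : ℝ) (S : ℝ → ℝ → ℝ → (ℝ × ℝ) → ℝ) : Prop :=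
  ContDiff ℝ (⊤ : ℕ∞) (fun p : ℝ × ℝ × ℝ × (ℝ × ℝ) => S p.1 p.2.1 p.2.2.1 p.2.2.2) ∧
  (∀ t τ θ x, S t τ (θ + 1) x = S t τ θ x) ∧
  (∀ t τ θ, SpacePeriodic (S t τ θ)) ∧
  (∀ t τ θ x, μ * S t τ θ x + deriv (fun σ => S t τ σ x) θ
      - div2 (fun y => (A t τ θ y + ν) • grad (S t τ θ) y) x = div2 (C t τ θ) x)

/-- `S(t,τ,·,·)` is, for all values of the parameters `t` and `τ`, a classical
solution, 1-periodic in `θ` and with zero spatial mean for every `θ`, of the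
`ν`-regularized cell problem
`∂S/∂θ − ∇·((Ã_ε(t,τ,·,·) + ν)∇S) = ∇·C̃_ε(t,τ,·,·)`. -/
def IsNuCellSolP (A : ℝ → ℝ → ℝ → (ℝ × ℝ) → ℝ) (C : ℝ → ℝ → ℝ → (ℝ × ℝ) → ℝ × ℝ)
    (ν : ℝ) (S : ℝ → ℝ → ℝ → (ℝ × ℝ) → ℝ) : Prop :=
  ContDiff ℝ (⊤ : ℕ∞) (fun p : ℝ × ℝ × ℝ × (ℝ × ℝ) => S p.1 p.2.1 p.2.2.1 p.2.2.2) ∧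
  (∀ t τ θ x, S t τ (θ + 1) x = S t τ θ x) ∧
  (∀ t τ θ, SpacePeriodic (S t τ θ)) ∧
  (∀ t τ θ x, deriv (fun σ => S t τ σ x) θ
      - div2 (fun y => (A t τ θ y + ν) • grad (S t τ θ) y) x = div2 (C t τ θ) x) ∧
  (∀ t τ θ : ℝ, ∫ x in Tsq, S t τ θ x = 0)

open Topology


abbrev E5 := ℝ × ℝ × ℝ × (ℝ × ℝ)

def ee (j : Fin 5) : E5 :=
  (if j = 0 then 1 else 0, if j = 1 then 1 else 0, if j = 2 then 1 else 0,
    (if j = 3 then 1 else 0, if j = 4 then 1 else 0))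

def pr (j : Fin 5) : E5 →L[ℝ] ℝ :=
  if j = 0 then ContinuousLinearMap.fst ℝ ℝ _
  else if j = 1 then (ContinuousLinearMap.fst ℝ ℝ _).comp (ContinuousLinearMap.snd ℝ ℝ _)
  else if j = 2 then (ContinuousLinearMap.fst ℝ ℝ _).comp
    ((ContinuousLinearMap.snd ℝ ℝ _).comp (ContinuousLinearMap.snd ℝ ℝ _))
  else if j = 3 then (ContinuousLinearMap.fst ℝ ℝ _).comp ((ContinuousLinearMap.snd ℝ ℝ _).comp
    ((ContinuousLinearMap.snd ℝ ℝ _).comp (ContinuousLinearMap.snd ℝ ℝ _)))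
  else (ContinuousLinearMap.snd ℝ ℝ _).comp ((ContinuousLinearMap.snd ℝ ℝ _).comp
    ((ContinuousLinearMap.snd ℝ ℝ _).comp (ContinuousLinearMap.snd ℝ ℝ _)))

lemma pr0 (p : E5) : pr 0 p = p.1 := by simp [pr]
lemma pr1 (p : E5) : pr 1 p = p.2.1 := by simp [pr]
lemma pr2 (p : E5) : pr 2 p = p.2.2.1 := by simp [pr]
lemma pr3 (p : E5) : pr 3 p = p.2.2.2.1 := by simp [pr]
lemma pr4 (p : E5) : pr 4 p = p.2.2.2.2 := by simp [pr]

lemma pr_ee (i j : Fin 5) : pr i (ee j) = if j = i then 1 else 0 := by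
  fin_cases i <;> fin_cases j <;> simp [pr, ee]

lemma sum_pr (v : E5) : ∑ j, pr j v • ee j = v := by
  simp only [Fin.sum_univ_five, pr0, pr1, pr2, pr3, pr4]
  obtain ⟨a, b, c, d, e⟩ := v
  simp [ee]

lemma clm_eq (φ : E5 →L[ℝ] ℝ) : φ = ∑ j, φ (ee j) • pr j := by
  ext1 <;> ext <;> simp [Fin.sum_univ_five, pr, ee] <;> rfl

lemma norm_pr_le (j : Fin 5) : ‖pr j‖ ≤ 1 := by
  refine ContinuousLinearMap.opNorm_le_bound _ zero_le_one (fun v => ?_)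
  rw [one_mul]
  obtain ⟨a, b, c, d, e⟩ := v
  simp only [Prod.norm_def]
  fin_cases j <;> simp [pr]

lemma norm_ee_le (j : Fin 5) : ‖ee j‖ ≤ 1 := by
  fin_cases j <;> simp [ee, Prod.norm_def]

/-- A class of functions closed under partial derivatives consists of smooth functions. -/
lemma cd_of_closed (P : (E5 → ℝ) → Prop)
    (h : ∀ f, P f → ∃ g : Fin 5 → E5 → ℝ, (∀ j, P (g j)) ∧
      ∀ p, HasFDerivAt f (∑ j, g j p • pr j) p) (f : E5 → ℝ) (hf : P f) :
    ContDiff ℝ (⊤ : ℕ∞) f := by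
  rw [contDiff_infty]
  intro n
  induction n generalizing f with
  | zero =>
    obtain ⟨g, -, hg⟩ := h f hf
    exact contDiff_zero.2 (continuous_iff_continuousAt.2 fun p => (hg p).continuousAt)
  | succ n ih =>
    obtain ⟨g, hgP, hg⟩ := h f hf
    push_cast
    rw [contDiff_succ_iff_fderiv]
    refine ⟨fun p => (hg p).differentiableAt, by simp, ?_⟩
    have : fderiv ℝ f = fun p => ∑ j, g j p • pr j := funext fun p => (hg p).fderiv
    rw [this]
    exact ContDiff.sum fun j _ => (ih _ (hgP j)).smul contDiff_const

def PP (f : E5 → ℝ) (j : Fin 5) (p : E5) : ℝ := fderiv ℝ f p (ee j)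

lemma PP_cd {f : E5 → ℝ} (hf : ContDiff ℝ (⊤ : ℕ∞) f) (j : Fin 5) :
    ContDiff ℝ (⊤ : ℕ∞) (PP f j) :=
  (hf.fderiv_right (by simp)).clm_apply contDiff_const

lemma hasFDeriv_PP {f : E5 → ℝ} (hf : ContDiff ℝ (⊤ : ℕ∞) f) (p : E5) :
    HasFDerivAt f (∑ j, PP f j p • pr j) p := by
  have h := ((hf.differentiable (by simp)) p).hasFDerivAt
  rw [clm_eq (fderiv ℝ f p)] at h
  exact h

def avg (i : Fin 5) (f : E5 → ℝ) (p : E5) : ℝ := ∫ s in (0:ℝ)..1, f (p + s • ee i)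

lemma avg_hasFDeriv (i : Fin 5) {f : E5 → ℝ} (hf : ContDiff ℝ (⊤ : ℕ∞) f) (p : E5) :
    HasFDerivAt (avg i f) (∑ j, avg i (PP f j) p • pr j) p := by
  have hfd : Continuous (fderiv ℝ f) := (hf.fderiv_right (m := (⊤ : ℕ∞)) (by simp)).continuous
  obtain ⟨C, hC⟩ := (isCompact_closedBall p 2).exists_bound_of_continuousOn hfd.continuousOn
  have key := intervalIntegral.hasFDerivAt_integral_of_dominated_of_fderiv_le (𝕜 := ℝ)
    (μ := volume) (a := 0) (b := 1)
    (F := fun q s => f (q + s • ee i)) (F' := fun q s => fderiv ℝ f (q + s • ee i))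
    (x₀ := p) (s := Metric.ball p 1) (bound := fun _ => C) (Metric.ball_mem_nhds _ one_pos)
    (Eventually.of_forall fun q => by
      have := hf.continuous
      exact (Continuous.aestronglyMeasurable (by fun_prop)))
    (by
      have := hf.continuous
      exact Continuous.intervalIntegrable (by fun_prop) _ _)
    (Continuous.aestronglyMeasurable (by fun_prop))
    (Eventually.of_forall fun s hs q hq => by
      refine hC _ ?_
      rw [Set.uIoc_of_le zero_le_one] at hs
      rw [mem_closedBall_iff_norm]
      rw [mem_ball_iff_norm] at hq
      calc ‖q + s • ee i - p‖ = ‖(q - p) + s • ee i‖ := by congr 1; abel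
        _ ≤ ‖q - p‖ + ‖s • ee i‖ := norm_add_le _ _
        _ ≤ 1 + 1 * 1 := by
            rw [norm_smul]
            gcongr
            · rw [Real.norm_eq_abs, abs_of_pos hs.1]; exact hs.2
            · exact norm_ee_le i
        _ = 2 := by norm_num)
    (by simp)
    (Eventually.of_forall fun s hs q hq => by
      have h := ((hf.differentiable (by simp)) (q + s • ee i)).hasFDerivAt
      have h2 : HasFDerivAt (fun q : E5 => q + s • ee i) (ContinuousLinearMap.id ℝ E5) q :=
        (hasFDerivAt_id q).add_const _
      have h3 := h.comp q h2
      rw [ContinuousLinearMap.comp_id] at h3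
      exact h3)
  refine HasFDerivAt.congr_fderiv key ?_
  symm
  have : (fun s : ℝ => fderiv ℝ f (p + s • ee i))
      = fun s => ∑ j, PP f j (p + s • ee i) • pr j := by
    funext s; exact clm_eq _
  change _ = ∫ s in (0:ℝ)..1, (fun s : ℝ => fderiv ℝ f (p + s • ee i)) s
  rw [this, intervalIntegral.integral_finsetSum]
  · refine Finset.sum_congr rfl fun j _ => ?_
    rw [intervalIntegral.integral_smul_const]; rfl
  · intro j _
    have := (PP_cd hf j).continuous
    exact Continuous.intervalIntegrable (by fun_prop) _ _

lemma avg_cd (i : Fin 5) {f : E5 → ℝ} (hf : ContDiff ℝ (⊤ : ℕ∞) f) :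
    ContDiff ℝ (⊤ : ℕ∞) (avg i f) := by
  refine cd_of_closed (fun g => ∃ f, ContDiff ℝ (⊤ : ℕ∞) f ∧ g = avg i f) ?_ _ ⟨f, hf, rfl⟩
  rintro _ ⟨f, hf, rfl⟩
  exact ⟨fun j => avg i (PP f j), fun j => ⟨_, PP_cd hf j, rfl⟩, avg_hasFDeriv i hf⟩

/-- The algebra of smooth functions, periodic in the last three variables. -/
def PA : Subalgebra ℝ (E5 → ℝ) where
  carrier := {f | ContDiff ℝ (⊤ : ℕ∞) f ∧ ∀ i : Fin 5, 2 ≤ i → ∀ p, f (p + ee i) = f p}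
  mul_mem' := fun ha hb => ⟨ha.1.mul hb.1, fun i hi p => by
    simp only [Pi.mul_apply, ha.2 i hi, hb.2 i hi]⟩
  add_mem' := fun ha hb => ⟨ha.1.add hb.1, fun i hi p => by
    simp only [Pi.add_apply, ha.2 i hi, hb.2 i hi]⟩
  algebraMap_mem' := fun r => ⟨contDiff_const, fun _ _ _ => rfl⟩

instance : CoeFun PA (fun _ => E5 → ℝ) := ⟨fun f => f.1⟩

@[ext] lemma PA_ext {f g : PA} (h : ∀ p, f p = g p) : f = g := Subtype.ext (funext h)

lemma pcd (f : PA) : ContDiff ℝ (⊤ : ℕ∞) (f : E5 → ℝ) := f.2.1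
lemma pcont (f : PA) : Continuous (f : E5 → ℝ) := f.2.1.continuous
lemma pdiff (f : PA) : Differentiable ℝ (f : E5 → ℝ) := f.2.1.differentiable (by simp)

@[simp] lemma PA_add (f g : PA) (p) : (f + g) p = f p + g p := rfl
@[simp] lemma PA_sub (f g : PA) (p) : (f - g) p = f p - g p := rfl
@[simp] lemma PA_neg (f : PA) (p) : (-f) p = -f p := rfl
@[simp] lemma PA_mul (f g : PA) (p) : (f * g) p = f p * g p := rfl
@[simp] lemma PA_smul (c : ℝ) (g : PA) (p) : (c • g) p = c * g p := rfl
@[simp] lemma PA_zero (p) : (0 : PA) p = 0 := rfl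
@[simp] lemma PA_one (p) : (1 : PA) p = 1 := rfl
@[simp] lemma PA_pow (f : PA) (n : ℕ) (p) : (f ^ n) p = f p ^ n := rfl
@[simp] lemma PA_algebraMap (c : ℝ) (p) : (algebraMap ℝ PA c) p = c := rfl

def evl (p : E5) : PA →+* ℝ where
  toFun f := f p
  map_one' := rfl
  map_mul' _ _ := rfl
  map_zero' := rfl
  map_add' _ _ := rfl

lemma evl_apply (p : E5) (f : PA) : evl p f = f p := rfl

@[simp] lemma PA_sum {ι : Type*} (s : Finset ι) (f : ι → PA) (p) :
    (∑ i ∈ s, f i) p = ∑ i ∈ s, f i p := map_sum (evl p) f s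

/-- Partial derivatives. -/
def DD (j : Fin 5) : PA →ₗ[ℝ] PA where
  toFun f := ⟨PP f j, PP_cd (pcd f) j, fun i hi p => by
    have h : (fun q => f (q + ee i)) = (f : E5 → ℝ) := funext (f.2.2 i hi)
    unfold PP
    conv_rhs => rw [← h]
    rw [fderiv_comp_add_right]⟩
  map_add' f g := by
    ext p
    simp only [PA_add]
    change fderiv ℝ ((f : E5 → ℝ) + (g : E5 → ℝ)) p (ee j) = fderiv ℝ f p _ + fderiv ℝ g p _
    rw [fderiv_add ((pdiff f) p) ((pdiff g) p)]; rfl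
  map_smul' c f := by
    ext p
    simp only [PA_smul, RingHom.id_apply]
    change fderiv ℝ (c • (f : E5 → ℝ)) p (ee j) = c * fderiv ℝ f p _
    rw [fderiv_const_smul ((pdiff f) p)]; rfl

lemma DD_apply (j : Fin 5) (f : PA) (p) : DD j f p = fderiv ℝ f p (ee j) := rfl

lemma DD_mul (j : Fin 5) (f g : PA) : DD j (f * g) = DD j f * g + f * DD j g := by
  ext p
  simp only [PA_add, PA_mul, DD_apply]
  change fderiv ℝ ((f : E5 → ℝ) * (g : E5 → ℝ)) p (ee j) = _
  rw [fderiv_mul ((pdiff f) p) ((pdiff g) p)]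
  simp; ring

lemma DD_comm (i j : Fin 5) (f : PA) : DD i (DD j f) = DD j (DD i f) := by
  ext p
  have hs : IsSymmSndFDerivAt ℝ (f : E5 → ℝ) p :=
    ((pcd f).contDiffAt).isSymmSndFDerivAt (by simp; exact WithTop.coe_le_coe.2 (le_top : (2:ℕ∞) ≤ ⊤))
  have hd : DifferentiableAt ℝ (fderiv ℝ (f : E5 → ℝ)) p :=
    (((pcd f).fderiv_right (m := (⊤ : ℕ∞)) (by simp)).differentiable (by simp)) p
  have key : ∀ i j : Fin 5, DD i (DD j f) p = fderiv ℝ (fderiv ℝ f) p (ee i) (ee j) := by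
    intro i j
    change fderiv ℝ (fun q => fderiv ℝ f q (ee j)) p (ee i) = _
    rw [fderiv_clm_apply hd (differentiableAt_const _)]
    simp
  rw [key, key]
  exact hs.eq _ _

lemma DD_algebraMap (j : Fin 5) (c : ℝ) : DD j (algebraMap ℝ PA c) = 0 := by
  ext p
  change fderiv ℝ (fun _ => c) p (ee j) = 0
  simp

lemma hasFDeriv_DD (f : PA) (p : E5) : HasFDerivAt (f : E5 → ℝ) (∑ j, DD j f p • pr j) p :=
  hasFDeriv_PP (pcd f) p

/-- Averages in the direction `i`. -/
def JJ (i : Fin 5) : PA →ₗ[ℝ] PA where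
  toFun f := ⟨avg i f, avg_cd i (pcd f), fun k hk p => by
    unfold avg
    congr 1; ext s
    rw [add_right_comm, f.2.2 k hk]⟩
  map_add' f g := by
    ext p
    have hf := (pcont f)
    have hg := (pcont g)
    exact intervalIntegral.integral_add (Continuous.intervalIntegrable (by fun_prop) _ _)
      (Continuous.intervalIntegrable (by fun_prop) _ _)
  map_smul' c f := by
    ext p
    exact intervalIntegral.integral_const_mul _ _

lemma JJ_apply (i : Fin 5) (f : PA) (p) : JJ i f p = ∫ s in (0:ℝ)..1, f (p + s • ee i) := rfl

lemma JJ_int (i : Fin 5) (f : PA) (p) (a b : ℝ) :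
    IntervalIntegrable (fun s => f (p + s • ee i)) volume a b := by
  have hf := (pcont f)
  exact Continuous.intervalIntegrable (by fun_prop) _ _

lemma DD_JJ (i j : Fin 5) (f : PA) : DD j (JJ i f) = JJ i (DD j f) := by
  ext p
  rw [DD_apply]
  have h := (avg_hasFDeriv i (pcd f) p).fderiv
  change fderiv ℝ (avg i f) p (ee j) = avg i (PP f j) p
  rw [h]
  simp [pr_ee]

lemma hasDeriv_line (i : Fin 5) (f : PA) (p) (s : ℝ) :
    HasDerivAt (fun s => f (p + s • ee i)) (DD i f (p + s • ee i)) s := by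
  have h := (((pdiff f)) (p + s • ee i)).hasFDerivAt
  have h2 : HasDerivAt (fun s : ℝ => p + s • ee i) (ee i) s := by
    simpa using ((hasDerivAt_id s).smul_const (ee i)).const_add p
  exact h.comp_hasDerivAt s h2

lemma ftc_line (i : Fin 5) (f : PA) (p) (a b : ℝ) :
    ∫ s in a..b, DD i f (p + s • ee i) = f (p + b • ee i) - f (p + a • ee i) :=
  intervalIntegral.integral_eq_sub_of_hasDerivAt (fun s _ => hasDeriv_line i f p s)
    (JJ_int i (DD i f) p a b)

lemma JJ_DD_self (i : Fin 5) (hi : 2 ≤ i) (f : PA) : JJ i (DD i f) = 0 := by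
  ext p
  rw [JJ_apply, ftc_line]
  simp [f.2.2 i hi]

lemma JJ_mono (i : Fin 5) {f g : PA} (h : ∀ p, f p ≤ g p) (p) : JJ i f p ≤ JJ i g p :=
  intervalIntegral.integral_mono_on zero_le_one (JJ_int i f p 0 1) (JJ_int i g p 0 1)
    fun _ _ => h _

lemma JJ_const_mul (i : Fin 5) {c f : PA} (h : ∀ p (s : ℝ), c (p + s • ee i) = c p) :
    JJ i (c * f) = c * JJ i f := by
  ext p
  simp only [PA_mul, JJ_apply, h]
  exact intervalIntegral.integral_const_mul _ _

lemma JJ_algebraMap (i : Fin 5) (c : ℝ) : JJ i (algebraMap ℝ PA c) = algebraMap ℝ PA c := by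
  ext p; simp [JJ_apply]

/-- The average in direction `i` does not depend on the coordinate `i`. -/
lemma JJ_inv (i : Fin 5) (hi : 2 ≤ i) (f : PA) (p) (s : ℝ) : JJ i f (p + s • ee i) = JJ i f p := by
  have h := ftc_line i (JJ i f) p 0 s
  rw [DD_JJ, JJ_DD_self i hi] at h
  simp at h
  linarith

lemma JJ_inv_of (i j : Fin 5) {f : PA} (h : ∀ p (s : ℝ), f (p + s • ee i) = f p) (p) (s : ℝ) :
    JJ j f (p + s • ee i) = JJ j f p := by
  simp only [JJ_apply]
  congr 1; ext r
  rw [add_right_comm, h]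


lemma sup_line (i : Fin 5) (hi : 2 ≤ i) (e g : PA) (h : ∀ p, DD i e p ≤ g p)
    (hg : ∀ p, 0 ≤ g p) (p : E5) : e p ≤ JJ i e p + JJ i g p := by
  have h1 : ∀ s ∈ Set.Icc (0:ℝ) 1, e p ≤ e (p + s • ee i) + JJ i g p := by
    intro s hs
    have h2 := ftc_line i e p s 1
    rw [one_smul, e.2.2 i hi] at h2
    have h3 : ∫ r in s..1, DD i e (p + r • ee i) ≤ ∫ r in s..1, g (p + r • ee i) :=
      intervalIntegral.integral_mono_on hs.2 (JJ_int i _ p s 1) (JJ_int i g p s 1) fun _ _ => h _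
    have h4 : ∫ r in s..1, g (p + r • ee i) ≤ JJ i g p :=
      intervalIntegral.integral_mono_interval hs.1 hs.2 le_rfl
        (Eventually.of_forall fun _ => hg _) (JJ_int i g p 0 1)
    linarith
  have h5 := intervalIntegral.integral_mono_on (zero_le_one' ℝ)
    (intervalIntegrable_const (c := e p) (μ := volume))
    ((JJ_int i e p 0 1).add (intervalIntegrable_const (c := JJ i g p))) h1
  rw [intervalIntegral.integral_add (JJ_int i e p 0 1) intervalIntegrable_const] at h5
  simpa [JJ_apply] using h5

lemma sob_line (i : Fin 5) (hi : 2 ≤ i) (f : PA) (p : E5) :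
    f p * f p ≤ JJ i ((2:ℝ) • (f * f) + DD i f * DD i f) p := by
  have h := sup_line i hi (f * f) (f * f + DD i f * DD i f)
    (fun q => by
      rw [DD_mul]; simp only [PA_add, PA_mul]
      nlinarith [sq_nonneg (f q - DD i f q)])
    (fun q => by simp only [PA_add, PA_mul]; nlinarith [sq_nonneg (f q), sq_nonneg (DD i f q)]) p
  simp only [map_add, PA_add, PA_mul, map_smul, PA_smul] at h ⊢
  linarith

lemma JJ_nonneg (i : Fin 5) {f : PA} (h : ∀ p, 0 ≤ f p) (p) : 0 ≤ JJ i f p := by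
  have := JJ_mono i (f := 0) (g := f) (fun p => by simpa using h p) p
  simpa using this

lemma jensen (i : Fin 5) (f : PA) (p : E5) : (JJ i f p) ^ 2 ≤ JJ i (f * f) p := by
  set c := JJ i f p with hc
  have h := JJ_nonneg i (f := f * f - (2 * c) • f + algebraMap ℝ PA (c ^ 2)) (fun q => by
    simp only [PA_add, PA_sub, PA_mul, PA_smul, PA_algebraMap]
    nlinarith [sq_nonneg (f q - c)]) p
  rw [map_add, map_sub, map_smul, JJ_algebraMap] at h
  simp only [PA_add, PA_sub, PA_smul, PA_algebraMap, ← hc] at h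
  nlinarith

lemma osc_line (i : Fin 5) (f : PA) (p : E5) (r s : ℝ) (h0 : 0 ≤ s) (hsr : s ≤ r) (h1 : r ≤ 1) :
    (f (p + r • ee i) - f (p + s • ee i)) ^ 2 ≤ JJ i (DD i f * DD i f) p := by
  have h2 := ftc_line i f p s r
  set a := f (p + r • ee i) - f (p + s • ee i) with ha
  set G : PA := (1/2:ℝ) • (DD i f * DD i f) + algebraMap ℝ PA (a ^ 2 / 2) with hG
  have h3 : ∫ x in s..r, a * DD i f (p + x • ee i) ≤ ∫ x in s..r, G (p + x • ee i) := by
    refine intervalIntegral.integral_mono_on hsr ((JJ_int i _ p s r).const_mul a)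
      (JJ_int i G p s r) fun x _ => ?_
    simp only [hG, PA_add, PA_smul, PA_mul, PA_algebraMap]
    nlinarith [sq_nonneg (a - DD i f (p + x • ee i))]
  have h4 : ∫ x in s..r, G (p + x • ee i) ≤ JJ i G p :=
      intervalIntegral.integral_mono_interval h0 hsr h1
        (Eventually.of_forall fun x => by
          simp only [hG, PA_add, PA_smul, PA_mul, PA_algebraMap]
          change 0 ≤ _
          nlinarith [sq_nonneg a, sq_nonneg (DD i f (p + x • ee i))]) (JJ_int i G p 0 1)
  rw [intervalIntegral.integral_const_mul, h2] at h3
  replace h4 := h3.trans h4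
  rw [hG, map_add, map_smul, JJ_algebraMap] at h4
  simp only [PA_add, PA_smul, PA_algebraMap] at h4
  nlinarith

lemma poinc_line (i : Fin 5) (f : PA) (p : E5) :
    JJ i (f * f) p ≤ (JJ i f p) ^ 2 + JJ i (DD i f * DD i f) p := by
  set d := JJ i (DD i f * DD i f) p with hd
  have hd0 : 0 ≤ d := JJ_nonneg i (fun q => by
    simp only [PA_mul]; exact mul_self_nonneg _) p
  have key : ∀ r ∈ Set.Icc (0:ℝ) 1, ∀ s ∈ Set.Icc (0:ℝ) 1,
      (f (p + r • ee i) - f (p + s • ee i)) ^ 2 ≤ d := by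
    intro r hr s hs
    rcases le_total s r with h | h
    · exact osc_line i f p r s hs.1 h hr.2
    · have := osc_line i f p s r hr.1 h hs.2
      nlinarith
  have k2 : ∀ r ∈ Set.Icc (0:ℝ) 1, f (p + r • ee i) * f (p + r • ee i)
      - 2 * JJ i f p * f (p + r • ee i) + JJ i (f * f) p ≤ d := by
    intro r hr
    set a := f (p + r • ee i)
    set G : PA := f * f - (2 * a) • f + algebraMap ℝ PA (a ^ 2)
    have h5 := intervalIntegral.integral_mono_on (zero_le_one' ℝ)
      (JJ_int i G p 0 1) (intervalIntegrable_const (c := d) (μ := volume)) (fun s hs => by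
        have := key r hr s hs
        simp only [G, PA_add, PA_sub, PA_mul, PA_smul, PA_algebraMap]
        nlinarith)
    rw [← JJ_apply, map_add, map_sub, map_smul, JJ_algebraMap] at h5
    simp only [PA_add, PA_sub, PA_smul, PA_algebraMap, intervalIntegral.integral_const,
      smul_eq_mul] at h5
    nlinarith
  set G : PA := f * f - (2 * JJ i f p) • f + algebraMap ℝ PA (JJ i (f * f) p)
  have h6 := intervalIntegral.integral_mono_on (zero_le_one' ℝ)
    (JJ_int i G p 0 1) (intervalIntegrable_const (c := d) (μ := volume)) (fun s hs => by
      have := k2 s hs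
      simp only [G, PA_add, PA_sub, PA_mul, PA_smul, PA_algebraMap]
      linarith)
  rw [← JJ_apply, map_add, map_sub, map_smul, JJ_algebraMap] at h6
  simp only [PA_add, PA_sub, PA_smul, PA_algebraMap, intervalIntegral.integral_const,
    smul_eq_mul] at h6
  nlinarith [jensen i f p]

lemma JJ_zero_of (i : Fin 5) {g : PA} (hg : ∀ p, 0 ≤ g p) {p : E5} (h : JJ i g p ≤ 0) :
    g p = 0 := by
  have hc : Continuous fun s : ℝ => g (p + s • ee i) := by
    have := pcont g
    fun_prop
  by_contra hne
  have hpos : 0 < g p := lt_of_le_of_ne (hg p) (Ne.symm hne)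
  have : 0 < ∫ s in (0:ℝ)..1, g (p + s • ee i) :=
    intervalIntegral.integral_pos zero_lt_one hc.continuousOn (fun s _ => hg _)
      ⟨0, by simp, by simpa using hpos⟩
  rw [← JJ_apply] at this
  linarith

/-- Space average. -/
def KK : PA →ₗ[ℝ] PA := (JJ 3).comp (JJ 4)
/-- Average over the three periodic variables. -/
def II : PA →ₗ[ℝ] PA := (JJ 2).comp KK

lemma KK_apply (f : PA) : KK f = JJ 3 (JJ 4 f) := rfl
lemma II_apply (f : PA) : II f = JJ 2 (KK f) := rfl

lemma KK_mono {f g : PA} (h : ∀ p, f p ≤ g p) (p) : KK f p ≤ KK g p :=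
  JJ_mono 3 (JJ_mono 4 h) p
lemma II_mono {f g : PA} (h : ∀ p, f p ≤ g p) (p) : II f p ≤ II g p :=
  JJ_mono 2 (KK_mono h) p
lemma KK_nonneg {f : PA} (h : ∀ p, 0 ≤ f p) (p) : 0 ≤ KK f p :=
  JJ_nonneg 3 (JJ_nonneg 4 h) p
lemma II_nonneg {f : PA} (h : ∀ p, 0 ≤ f p) (p) : 0 ≤ II f p :=
  JJ_nonneg 2 (KK_nonneg h) p

lemma DD_KK (j : Fin 5) (f : PA) : DD j (KK f) = KK (DD j f) := by
  simp only [KK_apply, DD_JJ]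
lemma DD_II (j : Fin 5) (f : PA) : DD j (II f) = II (DD j f) := by
  simp only [II_apply, DD_KK, DD_JJ]
lemma KK_DD3 (f : PA) : KK (DD 3 f) = 0 := by
  rw [KK_apply, ← DD_JJ, JJ_DD_self 3 (by decide)]
lemma KK_DD4 (f : PA) : KK (DD 4 f) = 0 := by
  rw [KK_apply, JJ_DD_self 4 (by decide), map_zero]
lemma II_DD (j : Fin 5) (hj : 2 ≤ j) (f : PA) : II (DD j f) = 0 := by
  fin_cases j
  · exact absurd hj (by decide)
  · exact absurd hj (by decide)
  · change JJ 2 (KK (DD 2 f)) = 0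
    rw [← DD_KK, JJ_DD_self 2 (by decide)]
  · change JJ 2 (KK (DD 3 f)) = 0
    rw [KK_DD3, map_zero]
  · change JJ 2 (KK (DD 4 f)) = 0
    rw [KK_DD4, map_zero]

lemma KK_algebraMap (c : ℝ) : KK (algebraMap ℝ PA c) = algebraMap ℝ PA c := by
  simp [KK_apply, JJ_algebraMap]
lemma II_algebraMap (c : ℝ) : II (algebraMap ℝ PA c) = algebraMap ℝ PA c := by
  simp [II_apply, KK_algebraMap, JJ_algebraMap]

lemma KK_zero_of {g : PA} (hg : ∀ p, 0 ≤ g p) {p : E5} (h : KK g p ≤ 0) : g p = 0 := by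
  have h1 := JJ_zero_of 3 (JJ_nonneg 4 hg) h
  exact JJ_zero_of 4 hg h1.le
lemma II_zero_of {g : PA} (hg : ∀ p, 0 ≤ g p) {p : E5} (h : II g p ≤ 0) : g p = 0 := by
  have h1 := JJ_zero_of 2 (KK_nonneg hg) h
  exact KK_zero_of hg h1.le

lemma poinc (w : PA) (hw : KK w = 0) (p : E5) :
    KK (w * w) p ≤ KK (DD 3 w * DD 3 w + DD 4 w * DD 4 w) p := by
  have h1 : ∀ q, JJ 4 (w * w) q ≤ (JJ 4 w * JJ 4 w + JJ 4 (DD 4 w * DD 4 w)) q := fun q => by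
    have := poinc_line 4 w q
    simp only [PA_add, PA_mul] at this ⊢
    nlinarith
  have h2 := JJ_mono 3 h1 p
  have h3 := poinc_line 3 (JJ 4 w) p
  rw [← KK_apply, hw] at h3
  have h4 : ∀ q, (DD 3 (JJ 4 w) * DD 3 (JJ 4 w)) q ≤ JJ 4 (DD 3 w * DD 3 w) q := fun q => by
    have := jensen 4 (DD 3 w) q
    rw [DD_JJ]
    simp only [PA_mul]; nlinarith
  have h5 := JJ_mono 3 h4 p
  simp only [map_add, PA_add, KK_apply, PA_zero] at *
  linarith

lemma poinc_II (w : PA) (hw : KK w = 0) (p : E5) :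
    II (w * w) p ≤ II (DD 3 w * DD 3 w + DD 4 w * DD 4 w) p :=
  JJ_mono 2 (poinc w hw) p

lemma sobolev (f : PA) (p : E5) : f p * f p ≤ II (
    (8:ℝ) • (f * f) + (4:ℝ) • (DD 4 f * DD 4 f) + (4:ℝ) • (DD 3 f * DD 3 f)
    + (2:ℝ) • (DD 4 (DD 3 f) * DD 4 (DD 3 f))
    + (4:ℝ) • (DD 2 f * DD 2 f) + (2:ℝ) • (DD 4 (DD 2 f) * DD 4 (DD 2 f))
    + (2:ℝ) • (DD 3 (DD 2 f) * DD 3 (DD 2 f))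
    + DD 4 (DD 3 (DD 2 f)) * DD 4 (DD 3 (DD 2 f))) p := by
  have a4 : ∀ (g : PA) q, (g * g) q ≤ JJ 4 ((2:ℝ) • (g * g) + DD 4 g * DD 4 g) q :=
    fun g q => sob_line 4 (by decide) g q
  have a3 : ∀ (g : PA) q, (g * g) q ≤ JJ 3 ((2:ℝ) • (g * g) + DD 3 g * DD 3 g) q :=
    fun g q => sob_line 3 (by decide) g q
  have b : ∀ (g : PA) q, (g * g) q ≤ KK ((4:ℝ) • (g * g) + (2:ℝ) • (DD 4 g * DD 4 g)
      + (2:ℝ) • (DD 3 g * DD 3 g) + DD 4 (DD 3 g) * DD 4 (DD 3 g)) q := by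
    intro g q
    refine (a3 g q).trans ?_
    rw [KK_apply]
    refine JJ_mono 3 (fun r => ?_) q
    have c1 := a4 g r
    have c2 := a4 (DD 3 g) r
    simp only [map_add, map_smul, PA_add, PA_smul] at *
    linarith
  refine (sob_line 2 (by decide) f p).trans ?_
  rw [II_apply]
  refine JJ_mono 2 (fun r => ?_) p
  have c1 := b f r
  have c2 := b (DD 2 f) r
  simp only [map_add, map_smul, PA_add, PA_smul] at *
  linarith

/-- Functions of the parameters only. -/
def PZ : Subalgebra ℝ PA where
  carrier := {c | ∀ i : Fin 5, 2 ≤ i → ∀ p (s : ℝ), c (p + s • ee i) = c p}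
  mul_mem' := fun ha hb i hi p s => by simp only [PA_mul, ha i hi, hb i hi]
  add_mem' := fun ha hb i hi p s => by simp only [PA_add, ha i hi, hb i hi]
  algebraMap_mem' := fun r i hi p s => rfl

lemma mem_PZ {c : PA} : c ∈ PZ ↔ ∀ i : Fin 5, 2 ≤ i → ∀ p (s : ℝ), c (p + s • ee i) = c p :=
  Iff.rfl

lemma II_mem (f : PA) : II f ∈ PZ := by
  intro i hi p s
  rw [II_apply, KK_apply]
  fin_cases i
  · exact absurd hi (by decide)
  · exact absurd hi (by decide)
  · exact JJ_inv 2 (by decide) _ p s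
  · exact JJ_inv_of 3 2 (JJ_inv 3 (by decide) _) p s
  · exact JJ_inv_of 4 2 (JJ_inv_of 4 3 (JJ_inv 4 (by decide) _)) p s

lemma KK_mul {c : PA} (h3 : ∀ p (s : ℝ), c (p + s • ee 3) = c p)
    (h4 : ∀ p (s : ℝ), c (p + s • ee 4) = c p) (f : PA) : KK (c * f) = c * KK f := by
  rw [KK_apply, JJ_const_mul 4 h4, JJ_const_mul 3 h3, KK_apply]

lemma KK_mul_Z {c : PA} (hc : c ∈ PZ) (f : PA) : KK (c * f) = c * KK f :=
  KK_mul (hc 3 (by decide)) (hc 4 (by decide)) f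

lemma II_mul_Z {c : PA} (hc : c ∈ PZ) (f : PA) : II (c * f) = c * II f := by
  rw [II_apply, KK_mul_Z hc, JJ_const_mul 2 (hc 2 (by decide)), II_apply]

lemma DD_mem_Z {c : PA} (hc : c ∈ PZ) (j : Fin 5) : DD j c ∈ PZ := by
  have : c = II c := by
    have := II_mul_Z hc (algebraMap ℝ PA 1)
    rw [II_algebraMap] at this
    simpa using this.symm
  rw [this, DD_II]
  exact II_mem _

lemma DD_Z {c : PA} (hc : c ∈ PZ) (j : Fin 5) (hj : 2 ≤ j) : DD j c = 0 := by
  have : c = II c := by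
    have := II_mul_Z hc (algebraMap ℝ PA 1)
    rw [II_algebraMap] at this
    simpa using this.symm
  rw [this, DD_II, II_DD j hj]


/-- Real trigonometric system on the circle. -/
def trg (k : ℤ) (r : ℝ) : ℝ :=
  if 0 ≤ k then Real.cos (2 * Real.pi * k * r) else Real.sin (2 * Real.pi * k * r)

lemma trg_per (k : ℤ) (r : ℝ) : trg k (r + 1) = trg k r := by
  unfold trg
  have : 2 * Real.pi * k * (r + 1) = 2 * Real.pi * k * r + k * (2 * Real.pi) := by ring
  rw [this, Real.cos_add_int_mul_two_pi, Real.sin_add_int_mul_two_pi]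

lemma trg_cd (k : ℤ) : ContDiff ℝ (⊤ : ℕ∞) (trg k) := by
  unfold trg
  split_ifs
  · exact Real.contDiff_cos.comp (contDiff_const.mul contDiff_id)
  · exact Real.contDiff_sin.comp (contDiff_const.mul contDiff_id)

lemma trg_deriv (k : ℤ) (r : ℝ) : HasDerivAt (trg k) (2 * Real.pi * k * trg (-k) r) r := by
  have hl : HasDerivAt (fun r : ℝ => 2 * Real.pi * k * r) (2 * Real.pi * k) r := by
    simpa using (hasDerivAt_id r).const_mul (2 * Real.pi * k)
  rcases lt_trichotomy k 0 with h | h | h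
  · have h1 : trg k = fun r => Real.sin (2 * Real.pi * k * r) := by
      funext r; simp [trg, not_le.2 h]
    have h2 : trg (-k) r = Real.cos (2 * Real.pi * k * r) := by
      simp [trg, h.le]
    rw [h1, h2]
    convert hl.sin using 1
    ring
  · subst h
    have h1 : trg 0 = fun _ => 1 := by funext r; simp [trg]
    rw [h1]
    simpa using hasDerivAt_const r (1:ℝ)
  · have h1 : trg k = fun r => Real.cos (2 * Real.pi * k * r) := by
      funext r; simp [trg, h.le]
    have h2 : trg (-k) r = -Real.sin (2 * Real.pi * k * r) := by
      simp [trg, h]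
    rw [h1, h2]
    convert hl.cos using 1
    ring

lemma pr_add_smul (i j : Fin 5) (p : E5) (s : ℝ) :
    pr i (p + s • ee j) = pr i p + if j = i then s else 0 := by
  rw [map_add, map_smul, pr_ee]; simp

def uu (i : Fin 5) (k : ℤ) : PA := ⟨fun p => trg k (pr i p), (trg_cd k).comp (pr i).contDiff,
  fun j _ p => by
    have := pr_add_smul i j p 1
    rw [one_smul] at this
    simp only [this]
    split_ifs
    · exact trg_per k _
    · simp⟩

lemma uu_apply (i : Fin 5) (k : ℤ) (p : E5) : uu i k p = trg k (pr i p) := rfl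

lemma uu_inv (i j : Fin 5) (h : j ≠ i) (k : ℤ) (p : E5) (s : ℝ) :
    uu i k (p + s • ee j) = uu i k p := by
  rw [uu_apply, uu_apply, pr_add_smul, if_neg h, add_zero]

lemma DD_uu (i j : Fin 5) (k : ℤ) :
    DD j (uu i k) = (if j = i then 2 * Real.pi * k else 0 : ℝ) • uu i (-k) := by
  ext p
  have h : HasFDerivAt (uu i k : E5 → ℝ) ((2 * Real.pi * k * trg (-k) (pr i p)) • pr i) p :=
    (trg_deriv k (pr i p)).comp_hasFDerivAt p (pr i).hasFDerivAt
  rw [DD_apply, h.fderiv, PA_smul, uu_apply]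
  simp [pr_ee]

def gg (k0 k1 k2 : ℤ) : PA := uu 2 k0 * uu 3 k1 * uu 4 k2

lemma DD_gg0 (k0 k1 k2 : ℤ) : DD 0 (gg k0 k1 k2) = 0 := by simp [gg, DD_mul, DD_uu]
lemma DD_gg1 (k0 k1 k2 : ℤ) : DD 1 (gg k0 k1 k2) = 0 := by simp [gg, DD_mul, DD_uu]
lemma DD_gg2 (k0 k1 k2 : ℤ) :
    DD 2 (gg k0 k1 k2) = (2 * Real.pi * k0) • gg (-k0) k1 k2 := by simp [gg, DD_mul, DD_uu]
lemma DD_gg3 (k0 k1 k2 : ℤ) :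
    DD 3 (gg k0 k1 k2) = (2 * Real.pi * k1) • gg k0 (-k1) k2 := by simp [gg, DD_mul, DD_uu]
lemma DD_gg4 (k0 k1 k2 : ℤ) :
    DD 4 (gg k0 k1 k2) = (2 * Real.pi * k2) • gg k0 k1 (-k2) := by simp [gg, DD_mul, DD_uu]

def GN (n : ℕ) : Set PA :=
  (fun k : ℤ × ℤ × ℤ => gg k.1 k.2.1 k.2.2) ''
    {k | (|k.1| ≤ n ∧ |k.2.1| ≤ n ∧ |k.2.2| ≤ n) ∧ (k.2.1 ≠ 0 ∨ k.2.2 ≠ 0)}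

lemma GN_finite (n : ℕ) : (GN n).Finite := by
  refine Set.Finite.image _ (Set.Finite.subset
    ((Set.finite_Icc (-n:ℤ) n).prod ((Set.finite_Icc (-n:ℤ) n).prod (Set.finite_Icc (-n:ℤ) n))) ?_)
  rintro ⟨k0, k1, k2⟩ ⟨⟨h0, h1, h2⟩, -⟩
  exact ⟨abs_le.1 h0, abs_le.1 h1, abs_le.1 h2⟩

def WN (n : ℕ) : Submodule PZ PA := Submodule.span PZ (GN n)

lemma Z_smul (c : PZ) (f : PA) : c • f = (c : PA) * f := rfl

lemma gg_mem {n : ℕ} {k0 k1 k2 : ℤ} (h0 : |k0| ≤ n) (h1 : |k1| ≤ n) (h2 : |k2| ≤ n)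
    (h : k1 ≠ 0 ∨ k2 ≠ 0) : gg k0 k1 k2 ∈ WN n :=
  Submodule.subset_span ⟨(k0, k1, k2), ⟨⟨h0, h1, h2⟩, h⟩, rfl⟩

lemma DD_WN {n : ℕ} {φ : PA} (h : φ ∈ WN n) (j : Fin 5) : DD j φ ∈ WN n := by
  induction h using Submodule.span_induction with
  | mem x hx =>
    obtain ⟨⟨k0, k1, k2⟩, ⟨⟨h0, h1, h2⟩, h⟩, rfl⟩ := hx
    simp only at h0 h1 h2 h
    fin_cases j
    · change DD 0 (gg k0 k1 k2) ∈ _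
      rw [DD_gg0]; exact zero_mem _
    · change DD 1 (gg k0 k1 k2) ∈ _
      rw [DD_gg1]; exact zero_mem _
    · change DD 2 (gg k0 k1 k2) ∈ _
      rw [DD_gg2]
      exact Submodule.smul_of_tower_mem _ _ (gg_mem (by rwa [abs_neg]) h1 h2 h)
    · change DD 3 (gg k0 k1 k2) ∈ _
      rw [DD_gg3]
      exact Submodule.smul_of_tower_mem _ _ (gg_mem h0 (by rwa [abs_neg]) h2 (by simpa using h))
    · change DD 4 (gg k0 k1 k2) ∈ _
      rw [DD_gg4]
      exact Submodule.smul_of_tower_mem _ _ (gg_mem h0 h1 (by rwa [abs_neg]) (by simpa using h))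
  | zero => rw [map_zero]; exact zero_mem _
  | add x y _ _ hx hy => rw [map_add]; exact add_mem hx hy
  | smul c x hx' hx =>
    rw [Z_smul, DD_mul]
    exact add_mem ((WN n).smul_mem ⟨_, DD_mem_Z c.2 j⟩ hx') ((WN n).smul_mem c hx)

lemma KK_WN {n : ℕ} {φ : PA} (h : φ ∈ WN n) : KK φ = 0 := by
  induction h using Submodule.span_induction with
  | mem x hx =>
    obtain ⟨⟨k0, k1, k2⟩, ⟨-, h⟩, rfl⟩ := hx
    simp only at h ⊢
    rcases h with h | h
    · have h3 := KK_DD3 (gg k0 (-k1) k2)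
      rw [DD_gg3, neg_neg, map_smul] at h3
      refine (smul_eq_zero.1 h3).resolve_left ?_
      have : (k1:ℝ) ≠ 0 := by exact_mod_cast h
      push_cast
      have := Real.pi_ne_zero
      simp_all
    · have h3 := KK_DD4 (gg k0 k1 (-k2))
      rw [DD_gg4, neg_neg, map_smul] at h3
      refine (smul_eq_zero.1 h3).resolve_left ?_
      have : (k2:ℝ) ≠ 0 := by exact_mod_cast h
      push_cast
      have := Real.pi_ne_zero
      simp_all
  | zero => exact map_zero _
  | add x y _ _ hx hy => rw [map_add, hx, hy, add_zero]
  | smul c x hx' hx => rw [Z_smul, KK_mul_Z c.2, hx, mul_zero]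

/-- The weak form. -/
def BB (a w F1 F2 φ : PA) : PA :=
  II (DD 2 w * φ + (a * DD 3 w + F1) * DD 3 φ + (a * DD 4 w + F2) * DD 4 φ)

def BR (a w F1 F2 : PA) : PA →ₗ[PZ] PA where
  toFun φ := BB a w F1 F2 φ
  map_add' φ ψ := by
    unfold BB
    rw [← map_add, (DD 3).map_add, (DD 4).map_add]
    congr 1; ring
  map_smul' c φ := by
    simp only [RingHom.id_apply, Z_smul]
    unfold BB
    rw [← II_mul_Z c.2, DD_mul, DD_mul, DD_Z c.2 3 (by decide), DD_Z c.2 4 (by decide)]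
    congr 1; ring

def BL (a φ : PA) : PA →ₗ[PZ] PA where
  toFun w := BB a w 0 0 φ
  map_add' w v := by
    unfold BB
    rw [← map_add, (DD 2).map_add, (DD 3).map_add, (DD 4).map_add]
    congr 1; ring
  map_smul' c φ := by
    simp only [RingHom.id_apply, Z_smul]
    unfold BB
    rw [← II_mul_Z c.2, DD_mul, DD_mul, DD_mul, DD_Z c.2 2 (by decide), DD_Z c.2 3 (by decide),
      DD_Z c.2 4 (by decide)]
    congr 1; ring

lemma BR_apply (a w F1 F2 φ : PA) : BR a w F1 F2 φ = BB a w F1 F2 φ := rfl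
lemma BL_apply (a w φ : PA) : BL a φ w = BB a w 0 0 φ := rfl

lemma BR_rsmul (a w F1 F2 φ : PA) (c : ℝ) : BR a w F1 F2 (c • φ) = c • BB a w F1 F2 φ :=
  (BR a w F1 F2).map_smul (algebraMap ℝ PZ c) φ
lemma BL_rsmul (a w φ : PA) (c : ℝ) : BL a φ (c • w) = c • BB a w 0 0 φ :=
  (BL a φ).map_smul (algebraMap ℝ PZ c) w

lemma BB_split (a w F1 F2 φ : PA) : BB a w F1 F2 φ = BB a w 0 0 φ + BB a 0 F1 F2 φ := by
  unfold BB
  rw [← map_add]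
  congr 1
  simp only [map_zero]
  ring

lemma energy (a w F1 F2 : PA) (ν : ℝ) (hν : 0 < ν) (ha : ∀ p, ν ≤ a p) (p : E5)
    (h : BB a w F1 F2 w p = 0) :
    II (DD 3 w * DD 3 w + DD 4 w * DD 4 w) p ≤ (ν ^ 2)⁻¹ * II (F1 * F1 + F2 * F2) p := by
  set X : PA := (a * DD 3 w + F1) * DD 3 w + (a * DD 4 w + F2) * DD 4 w with hX
  have h0 : II X p = 0 := by
    have h1 : II (DD 2 (w * w)) = 0 := II_DD 2 (by decide) _
    have h2 : (2:ℝ) • BB a w F1 F2 w = II (DD 2 (w * w)) + (2:ℝ) • II X := by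
      unfold BB
      rw [← map_smul, ← map_smul, ← map_add]
      congr 1
      rw [DD_mul, hX]
      simp only [two_smul]
      ring
    have h3 := congrArg (fun f : PA => f p) h2
    simp only [h1, PA_smul, PA_add, PA_zero, h] at h3
    linarith
  have h4 := II_mono (f := (ν / 2) • (DD 3 w * DD 3 w + DD 4 w * DD 4 w)
      - (2 * ν)⁻¹ • (F1 * F1 + F2 * F2)) (g := X) (fun q => by
    simp only [hX, PA_sub, PA_add, PA_smul, PA_mul]
    have key : ∀ x f : ℝ, ν / 2 * x ^ 2 - (2 * ν)⁻¹ * f ^ 2 ≤ (a q * x + f) * x := by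
      intro x f
      have h5 : (a q * x + f) * x - (ν / 2 * x ^ 2 - (2 * ν)⁻¹ * f ^ 2)
        = (a q - ν) * x ^ 2 + (2 * ν)⁻¹ * (ν * x + f) ^ 2 := by
          field_simp; ring
      have h6 : 0 ≤ (a q - ν) * x ^ 2 := mul_nonneg (by linarith [ha q]) (sq_nonneg _)
      have h7 : 0 ≤ (2 * ν)⁻¹ * (ν * x + f) ^ 2 := by positivity
      linarith
    have k1 := key (DD 3 w q) (F1 q)
    have k2 := key (DD 4 w q) (F2 q)
    nlinarith) p
  rw [h0, map_sub, map_smul, map_smul] at h4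
  simp only [PA_sub, PA_smul] at h4
  rw [inv_mul_eq_div, le_div_iff₀ (by positivity)]
  rw [sub_nonpos, inv_mul_eq_div, le_div_iff₀ (by positivity)] at h4
  nlinarith

def evZ (p : E5) : PZ →+* ℝ := (evl p).comp PZ.val.toRingHom

lemma evZ_apply (p : E5) (c : PZ) : evZ p c = (c : PA) p := rfl

lemma isUnit_Z (d : PZ) (h : ∀ p, evZ p d ≠ 0) : IsUnit d := by
  have h' : ∀ p, (d : PA) p ≠ 0 := h
  refine IsUnit.of_mul_eq_one (⟨⟨fun p => ((d : PA) p)⁻¹, (pcd (d : PA)).inv h',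
    fun i hi p => by simp only [(d : PA).2.2 i hi]⟩, fun i hi p s => ?_⟩ : PZ) ?_
  · change ((d : PA) (p + s • ee i))⁻¹ = ((d : PA) p)⁻¹
    rw [d.2 i hi]
  · apply Subtype.ext
    ext p
    exact mul_inv_cancel₀ (h' p)

lemma const_of_DD {f : PA} (h : ∀ j, DD j f = 0) (p q : E5) : f p = f q := by
  refine is_const_of_fderiv_eq_zero (𝕜 := ℝ) (pdiff f) (fun x => ?_) p q
  rw [(hasFDeriv_DD f x).fderiv]
  simp [h]

lemma galerkin_exists (a C1 C2 : PA) (ν : ℝ) (hν : 0 < ν) (ha : ∀ p, ν ≤ a p) (n : ℕ) :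
    ∃ S ∈ WN n, ∀ φ ∈ WN n, BB a S C1 C2 φ = 0 := by
  obtain ⟨b, hbs, hspan, hli⟩ := exists_linearIndependent ℝ (GN n)
  have hbf : b.Finite := (GN_finite n).subset hbs
  have := hbf.fintype
  classical
  have hbW : ∀ i : b, (i : PA) ∈ WN n := fun i => Submodule.subset_span (hbs i.2)
  have hWb : WN n = Submodule.span PZ b := by
    refine le_antisymm (Submodule.span_le.2 fun x hx => ?_) (Submodule.span_mono hbs)
    have : x ∈ Submodule.span ℝ b := by rw [hspan]; exact Submodule.subset_span hx
    exact Submodule.span_le_restrictScalars ℝ PZ b this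
  let M : Matrix b b PZ := fun i j => ⟨BB a j 0 0 i, II_mem _⟩
  let r : b → PZ := fun i => -⟨BB a 0 C1 C2 i, II_mem _⟩
  have hdet : IsUnit M.det := by
    refine isUnit_Z _ fun p hp => ?_
    have hp' : ((evZ p).mapMatrix M).det = 0 := (RingHom.map_det (evZ p) M).symm.trans hp
    obtain ⟨v, hv0, hv⟩ := Matrix.exists_mulVec_eq_zero_iff.2 hp'
    apply hv0
    set w : PA := ∑ j, v j • (j : PA) with hw
    have hwW : w ∈ WN n := sum_mem fun j _ => Submodule.smul_of_tower_mem _ _ (hbW j)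
    have hBi : ∀ i : b, BB a w 0 0 i p = 0 := by
      intro i
      have h1 : BB a w 0 0 i = ∑ j, v j • BB a j 0 0 i := by
        rw [← BL_apply, hw, map_sum]
        refine Finset.sum_congr rfl fun j _ => ?_
        rw [BL_rsmul]
      have h2 := congrFun hv i
      simp only [Matrix.mulVec, dotProduct, Pi.zero_apply] at h2
      rw [h1, PA_sum, ← h2]
      refine Finset.sum_congr rfl fun j _ => ?_
      rw [PA_smul, mul_comm]
      rfl
    have hBw : BB a w 0 0 w p = 0 := by
      have h1 : BB a w 0 0 w = ∑ j, v j • BB a w 0 0 j := by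
        rw [← BR_apply]
        conv_lhs => rw [hw, map_sum]
        refine Finset.sum_congr rfl fun j _ => ?_
        rw [BR_rsmul, ← hw]
      rw [h1, PA_sum]
      exact Finset.sum_eq_zero fun j _ => by rw [PA_smul, hBi, mul_zero]
    have hE := energy a w 0 0 ν hν ha p hBw
    have hP := poinc_II w (KK_WN hwW) p
    have hI : II (w * w) p ≤ 0 := by
      refine hP.trans (hE.trans ?_)
      simp
    have hw0 : ∀ j : Fin 5, j < 2 → DD j w = 0 := by
      intro j hj
      rw [hw, map_sum]
      refine Finset.sum_eq_zero fun i _ => ?_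
      rw [map_smul]
      obtain ⟨k, -, hk⟩ := hbs i.2
      rw [← hk]
      have : j = 0 ∨ j = 1 := by omega
      rcases this with rfl | rfl
      · rw [DD_gg0, smul_zero]
      · rw [DD_gg1, smul_zero]
    have hIc : ∀ q, II (w * w) q ≤ 0 := by
      intro q
      rw [const_of_DD (f := II (w * w)) (fun j => ?_) q p]
      · exact hI
      · rw [DD_II]
        by_cases hj : 2 ≤ j
        · exact II_DD j hj _
        · rw [DD_mul, hw0 j (not_le.1 hj)]; simp
    have hwz : w = 0 := by
      ext q
      have := II_zero_of (g := w * w) (fun q => mul_self_nonneg _) (hIc q)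
      exact mul_self_eq_zero.1 this
    have := Fintype.linearIndependent_iff.1 hli v (by rw [← hwz, hw])
    exact funext this
  let c : b → PZ := M⁻¹.mulVec r
  have hc : M.mulVec c = r := by
    simp only [c]
    rw [Matrix.mulVec_mulVec, Matrix.mul_nonsing_inv _ hdet, Matrix.one_mulVec]
  refine ⟨∑ j, c j • (j : PA), sum_mem fun j _ => (WN n).smul_mem _ (hbW j), ?_⟩
  intro φ hφ
  rw [← BR_apply]
  rw [hWb] at hφ
  have hle : Submodule.span PZ b ≤ LinearMap.ker (BR a (∑ j, c j • (j : PA)) C1 C2) := by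
    refine Submodule.span_le.2 fun x hx => ?_
    rw [SetLike.mem_coe, LinearMap.mem_ker, BR_apply, BB_split, ← BL_apply, map_sum]
    have h2 := congrArg (fun z : PZ => (z : PA)) (congrFun hc ⟨x, hx⟩)
    simp only [Matrix.mulVec, dotProduct, r, M] at h2
    push_cast at h2
    rw [add_eq_zero_iff_eq_neg, ← h2]
    refine Finset.sum_congr rfl fun j _ => ?_
    rw [map_smul, BL_apply, Z_smul, mul_comm]
  exact hle hφ


lemma gal_step {n : ℕ} {a w F1 F2 : PA} (h : ∀ φ ∈ WN n, BB a w F1 F2 φ = 0) (j : Fin 5) :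
    ∀ φ ∈ WN n, BB a (DD j w) (DD j F1 + DD j a * DD 3 w) (DD j F2 + DD j a * DD 4 w) φ = 0 := by
  intro φ hφ
  have h1 : DD j (BB a w F1 F2 φ) =
      BB a (DD j w) (DD j F1 + DD j a * DD 3 w) (DD j F2 + DD j a * DD 4 w) φ
        + BB a w F1 F2 (DD j φ) := by
    unfold BB
    rw [DD_II, ← map_add]
    congr 1
    simp only [map_add, DD_mul, DD_comm j 2, DD_comm j 3, DD_comm j 4]
    ring
  rw [h φ hφ, h _ (DD_WN hφ j), map_zero, add_zero] at h1
  exact h1.symm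

lemma JJ_mono_at (i : Fin 5) {f g : PA} (p) (R : ℝ) (hp : ‖p‖ ≤ R)
    (h : ∀ q, ‖q‖ ≤ R + 1 → f q ≤ g q) : JJ i f p ≤ JJ i g p :=
  intervalIntegral.integral_mono_on zero_le_one (JJ_int i f p 0 1) (JJ_int i g p 0 1)
    fun s hs => h _ (by
      refine (norm_add_le _ _).trans (add_le_add hp ?_)
      rw [norm_smul, Real.norm_eq_abs, abs_of_nonneg hs.1]
      exact mul_le_one₀ hs.2 (norm_nonneg _) (norm_ee_le i))

lemma II_mono_at {f g : PA} (p) (R : ℝ) (hp : ‖p‖ ≤ R)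
    (h : ∀ q, ‖q‖ ≤ R + 3 → f q ≤ g q) : II f p ≤ II g p :=
  JJ_mono_at 2 p R hp fun q hq => JJ_mono_at 3 q _ hq fun r hr => JJ_mono_at 4 r _ hr
    fun s hs => h s (by linarith)

def LB (f : ℕ → PA) : Prop := ∀ R : ℝ, ∃ C : ℝ, ∀ n p, ‖p‖ ≤ R → II (f n * f n) p ≤ C

lemma LB.add {f g : ℕ → PA} (hf : LB f) (hg : LB g) : LB (fun n => f n + g n) := by
  intro R
  obtain ⟨C, hC⟩ := hf R
  obtain ⟨C', hC'⟩ := hg R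
  refine ⟨2 * C + 2 * C', fun n p hp => ?_⟩
  have h1 := II_mono (f := (f n + g n) * (f n + g n))
    (g := (2:ℝ) • (f n * f n) + (2:ℝ) • (g n * g n)) (fun q => by
      simp only [PA_add, PA_mul, PA_smul]
      nlinarith [sq_nonneg (f n q - g n q)]) p
  rw [map_add, map_smul, map_smul] at h1
  simp only [PA_add, PA_smul] at h1
  linarith [hC n p hp, hC' n p hp]

lemma PA_bdd (a : PA) (R : ℝ) : ∃ C, ∀ q, ‖q‖ ≤ R → |a q| ≤ C := by
  obtain ⟨C, hC⟩ := (isCompact_closedBall (0:E5) R).exists_bound_of_continuousOn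
    (pcont a).continuousOn
  exact ⟨C, fun q hq => hC q (by simpa using hq)⟩

lemma LB.mul {f : ℕ → PA} (a : PA) (hf : LB f) : LB (fun n => a * f n) := by
  intro R
  obtain ⟨C, hC⟩ := hf R
  obtain ⟨K, hK⟩ := PA_bdd a (R + 3)
  refine ⟨K ^ 2 * C, fun n p hp => ?_⟩
  have h1 := II_mono_at (f := (a * f n) * (a * f n)) (g := (K ^ 2) • (f n * f n)) p R hp
    (fun q hq => by
      simp only [PA_mul, PA_smul]
      have h2 : a q ^ 2 ≤ K ^ 2 := sq_le_sq' (abs_le.1 (hK q hq)).1 (abs_le.1 (hK q hq)).2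
      nlinarith [mul_le_mul_of_nonneg_right h2 (sq_nonneg (f n q))])
  rw [map_smul] at h1
  simp only [PA_smul] at h1
  exact h1.trans (mul_le_mul_of_nonneg_left (hC n p hp) (sq_nonneg _))

lemma LB.const (a : PA) : LB (fun _ => a) := by
  intro R
  obtain ⟨C, hC⟩ := PA_bdd (II (a * a)) R
  exact ⟨C, fun n p hp => (le_abs_self _).trans (hC p hp)⟩

def Bd : ℕ → (ℕ → PA) → Prop
  | 0, f => LB f
  | m + 1, f => LB f ∧ ∀ j, Bd m (fun n => DD j (f n))

lemma Bd.lb {m : ℕ} {f : ℕ → PA} (h : Bd m f) : LB f := by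
  cases m with
  | zero => exact h
  | succ m => exact h.1

lemma Bd.pred {m : ℕ} : ∀ {f : ℕ → PA}, Bd (m + 1) f → Bd m f := by
  induction m with
  | zero => intro f h; exact h.1
  | succ m ih => intro f h; exact ⟨h.1, fun j => ih (h.2 j)⟩

lemma Bd.add {m : ℕ} : ∀ {f g : ℕ → PA}, Bd m f → Bd m g → Bd m (fun n => f n + g n) := by
  induction m with
  | zero => intro f g hf hg; exact LB.add hf hg
  | succ m ih =>
    intro f g hf hg
    refine ⟨hf.1.add hg.1, fun j => ?_⟩
    simp only [map_add]
    exact ih (hf.2 j) (hg.2 j)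

lemma Bd.mul {m : ℕ} : ∀ {f : ℕ → PA} (a : PA), Bd m f → Bd m (fun n => a * f n) := by
  induction m with
  | zero => intro f a hf; exact LB.mul a hf
  | succ m ih =>
    intro f a hf
    refine ⟨hf.1.mul a, fun j => ?_⟩
    simp only [DD_mul]
    exact (ih (DD j a) hf.pred).add (ih a (hf.2 j))

lemma Bd.const {m : ℕ} : ∀ (a : PA), Bd m (fun _ => a) := by
  induction m with
  | zero => intro a; exact LB.const a
  | succ m ih => intro a; exact ⟨LB.const a, fun j => ih (DD j a)⟩

lemma gal_bd (a : PA) (ν : ℝ) (hν : 0 < ν) (ha : ∀ p, ν ≤ a p) (m : ℕ) :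
    ∀ (w F1 F2 : ℕ → PA), (∀ n, w n ∈ WN n) →
      (∀ n, ∀ φ ∈ WN n, BB a (w n) (F1 n) (F2 n) φ = 0) → Bd m F1 → Bd m F2 →
      Bd m w ∧ Bd m (fun n => DD 3 (w n)) ∧ Bd m (fun n => DD 4 (w n)) := by
  have base : ∀ (w F1 F2 : ℕ → PA), (∀ n, w n ∈ WN n) →
      (∀ n, ∀ φ ∈ WN n, BB a (w n) (F1 n) (F2 n) φ = 0) → LB F1 → LB F2 →
      LB w ∧ LB (fun n => DD 3 (w n)) ∧ LB (fun n => DD 4 (w n)) := by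
    intro w F1 F2 hw hg h1 h2
    have key : ∀ R : ℝ, ∃ C, ∀ n p, ‖p‖ ≤ R →
        II (DD 3 (w n) * DD 3 (w n) + DD 4 (w n) * DD 4 (w n)) p ≤ C := by
      intro R
      obtain ⟨C, hC⟩ := h1 R
      obtain ⟨C', hC'⟩ := h2 R
      refine ⟨(ν ^ 2)⁻¹ * (C + C'), fun n p hp => ?_⟩
      refine (energy a (w n) (F1 n) (F2 n) ν hν ha p (by rw [hg n _ (hw n)]; rfl)).trans ?_
      refine mul_le_mul_of_nonneg_left ?_ (by positivity)
      rw [map_add, PA_add]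
      exact add_le_add (hC n p hp) (hC' n p hp)
    refine ⟨fun R => ?_, fun R => ?_, fun R => ?_⟩
    · obtain ⟨C, hC⟩ := key R
      exact ⟨C, fun n p hp => (poinc_II (w n) (KK_WN (hw n)) p).trans (hC n p hp)⟩
    · obtain ⟨C, hC⟩ := key R
      refine ⟨C, fun n p hp => le_trans (II_mono (fun q => ?_) p) (hC n p hp)⟩
      simp only [PA_add, PA_mul]
      nlinarith [sq_nonneg (DD 4 (w n) q)]
    · obtain ⟨C, hC⟩ := key R
      refine ⟨C, fun n p hp => le_trans (II_mono (fun q => ?_) p) (hC n p hp)⟩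
      simp only [PA_add, PA_mul]
      nlinarith [sq_nonneg (DD 3 (w n) q)]
  induction m with
  | zero => exact base
  | succ m ih =>
    intro w F1 F2 hw hg h1 h2
    obtain ⟨b1, b2, b3⟩ := base w F1 F2 hw hg h1.lb h2.lb
    obtain ⟨i1, i2, i3⟩ := ih w F1 F2 hw hg h1.pred h2.pred
    have st : ∀ j, Bd m (fun n => DD j (w n)) ∧ Bd m (fun n => DD 3 (DD j (w n))) ∧
        Bd m (fun n => DD 4 (DD j (w n))) := fun j =>
      ih (fun n => DD j (w n)) (fun n => DD j (F1 n) + DD j a * DD 3 (w n))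
        (fun n => DD j (F2 n) + DD j a * DD 4 (w n)) (fun n => DD_WN (hw n) j)
        (fun n => gal_step (hg n) j) ((h1.2 j).add (i2.mul _)) ((h2.2 j).add (i3.mul _))
    refine ⟨⟨b1, fun j => (st j).1⟩, ⟨b2, fun j => ?_⟩, ⟨b3, fun j => ?_⟩⟩
    · simp only [DD_comm j 3]; exact (st j).2.1
    · simp only [DD_comm j 4]; exact (st j).2.2

def Tame (f : ℕ → PA) : Prop := ∀ m, Bd m f

lemma Tame.add {f g : ℕ → PA} (hf : Tame f) (hg : Tame g) : Tame (fun n => f n + g n) :=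
  fun m => (hf m).add (hg m)
lemma Tame.mul {f : ℕ → PA} (a : PA) (hf : Tame f) : Tame (fun n => a * f n) :=
  fun m => (hf m).mul a
lemma Tame.const (a : PA) : Tame (fun _ => a) := fun _ => Bd.const a
lemma Tame.DD {f : ℕ → PA} (hf : Tame f) (j : Fin 5) : Tame (fun n => DD j (f n)) :=
  fun m => (hf (m + 1)).2 j

lemma Tame.pb {f : ℕ → PA} (hf : Tame f) (R : ℝ) : ∃ C, ∀ n p, ‖p‖ ≤ R → |f n p| ≤ C := by
  obtain ⟨c0, h0⟩ := (hf 0) R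
  obtain ⟨c1, h1⟩ := (hf.DD 4 0) R
  obtain ⟨c2, h2⟩ := (hf.DD 3 0) R
  obtain ⟨c3, h3⟩ := ((hf.DD 3).DD 4 0) R
  obtain ⟨c4, h4⟩ := (hf.DD 2 0) R
  obtain ⟨c5, h5⟩ := ((hf.DD 2).DD 4 0) R
  obtain ⟨c6, h6⟩ := ((hf.DD 2).DD 3 0) R
  obtain ⟨c7, h7⟩ := (((hf.DD 2).DD 3).DD 4 0) R
  refine ⟨8 * c0 + 4 * c1 + 4 * c2 + 2 * c3 + 4 * c4 + 2 * c5 + 2 * c6 + c7 + 1,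
    fun n p hp => ?_⟩
  have h := sobolev (f n) p
  simp only [map_add, map_smul, PA_add, PA_smul] at h
  have e0 := h0 n p hp
  have e1 := h1 n p hp
  have e2 := h2 n p hp
  have e3 := h3 n p hp
  have e4 := h4 n p hp
  have e5 := h5 n p hp
  have e6 := h6 n p hp
  have e7 := h7 n p hp
  have h9 : |f n p| ≤ f n p * f n p + 1 := by
    rw [← abs_mul_abs_self (f n p)]
    nlinarith [sq_nonneg (|f n p| - 1), abs_nonneg (f n p)]
  linarith

lemma norm_sum_pr {c : Fin 5 → ℝ} {C : ℝ} (h : ∀ j, |c j| ≤ C) : ‖∑ j, c j • pr j‖ ≤ 5 * C := by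
  refine (norm_sum_le _ _).trans ?_
  have : ∀ j ∈ Finset.univ, ‖c j • pr j‖ ≤ C := fun j _ => by
    rw [norm_smul]
    calc ‖c j‖ * ‖pr j‖ ≤ C * 1 := by
          gcongr
          · exact (abs_nonneg _).trans (h j)
          · exact h j
          · exact norm_pr_le j
      _ = C := mul_one _
  refine (Finset.sum_le_sum this).trans ?_
  simp

lemma lip_of {g : PA} {R C : ℝ} (h : ∀ j q, ‖q‖ ≤ R → |DD j g q| ≤ C) {p q : E5}
    (hp : ‖p‖ ≤ R) (hq : ‖q‖ ≤ R) : |g q - g p| ≤ 5 * C * ‖q - p‖ := by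
  refine Convex.norm_image_sub_le_of_norm_hasFDerivWithin_le (𝕜 := ℝ)
    (s := Metric.closedBall (0:E5) R) (f' := fun z => ∑ j, DD j g z • pr j)
    (fun z _ => (hasFDeriv_DD g z).hasFDerivWithinAt) (fun z hz => ?_) (convex_closedBall _ _)
    (by simpa using hp) (by simpa using hq)
  exact norm_sum_pr fun j => h j z (by simpa using hz)

lemma taylor_of {g : PA} {R C : ℝ} (h : ∀ k j q, ‖q‖ ≤ R → |DD k (DD j g) q| ≤ C) {p q : E5}
    (hp : ‖p‖ ≤ R) (hq : ‖q‖ ≤ R) :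
    |g q - g p - (∑ j, DD j g p • pr j) (q - p)| ≤ 25 * C * ‖q - p‖ * ‖q - p‖ := by
  have hC : 0 ≤ C := (abs_nonneg _).trans (h 0 0 p hp)
  refine Convex.norm_image_sub_le_of_norm_hasFDerivWithin_le' (𝕜 := ℝ)
    (s := segment ℝ p q) (f' := fun z => ∑ j, DD j g z • pr j)
    (fun z _ => (hasFDeriv_DD g z).hasFDerivWithinAt) (fun z hz => ?_) (convex_segment _ _)
    (left_mem_segment ℝ p q) (right_mem_segment ℝ p q)
  have hzR : ‖z‖ ≤ R := by
    have := (convex_closedBall (0:E5) R).segment_subset (x := p) (y := q)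
      (by simpa using hp) (by simpa using hq) hz
    simpa using this
  have hzp : ‖z - p‖ ≤ ‖q - p‖ := by
    obtain ⟨s, t, hs, ht, hst, rfl⟩ := hz
    have : s • p + t • q - p = t • (q - p) := by
      have : s = 1 - t := by linarith
      rw [this]; module
    rw [this, norm_smul, Real.norm_eq_abs, abs_of_nonneg ht]
    exact mul_le_of_le_one_left (norm_nonneg _) (by linarith)
  rw [← Finset.sum_sub_distrib]
  simp only [← sub_smul]
  refine (norm_sum_pr (C := 5 * C * ‖q - p‖) fun j => ?_).trans (le_of_eq (by ring))
  refine (lip_of (fun k q' hq' => h k j q' hq') hp hzR).trans ?_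
  gcongr

abbrev UF : Filter ℕ := (hyperfilter ℕ : Ultrafilter ℕ)

def ulim (f : ℕ → PA) (p : E5) : ℝ := limUnder UF (fun n => f n p)

lemma ulim_tendsto {f : ℕ → PA} (hf : Tame f) (p : E5) :
    Tendsto (fun n => f n p) UF (𝓝 (ulim f p)) := by
  apply tendsto_nhds_limUnder
  obtain ⟨C, hC⟩ := hf.pb ‖p‖
  obtain ⟨x, -, hx⟩ := (isCompact_Icc (a := -C) (b := C)).ultrafilter_le_nhds
    ((hyperfilter ℕ).map (fun n => f n p)) (by
      rw [le_principal_iff]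
      refine Eventually.of_forall (f := UF) fun n => ?_
      exact abs_le.1 (hC n p le_rfl))
  exact ⟨x, hx⟩

lemma ulim_hasFDeriv {f : ℕ → PA} (hf : Tame f) (p : E5) :
    HasFDerivAt (ulim f) (∑ j, ulim (fun n => DD j (f n)) p • pr j) p := by
  have hb : ∃ C, ∀ n k j q, ‖q‖ ≤ ‖p‖ + 1 → |DD k (DD j (f n)) q| ≤ C := by
    choose c hc using fun k j => ((hf.DD j).DD k).pb (‖p‖ + 1)
    refine ⟨∑ k, ∑ j, |c k j|, fun n k j q hq => (hc k j n q hq).trans ?_⟩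
    refine (le_abs_self _).trans ?_
    refine (Finset.single_le_sum (f := fun j => |c k j|) (fun _ _ => abs_nonneg _)
      (Finset.mem_univ j)).trans ?_
    exact Finset.single_le_sum (f := fun k => ∑ j, |c k j|)
      (fun _ _ => Finset.sum_nonneg fun _ _ => abs_nonneg _) (Finset.mem_univ k)
  obtain ⟨C, hC⟩ := hb
  set L := ∑ j, ulim (fun n => DD j (f n)) p • pr j with hL
  have key : ∀ q, ‖q - p‖ ≤ 1 →
      |ulim f q - ulim f p - L (q - p)| ≤ 25 * C * ‖q - p‖ * ‖q - p‖ := by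
    intro q hq
    have hqR : ‖q‖ ≤ ‖p‖ + 1 := by
      calc ‖q‖ = ‖p + (q - p)‖ := by congr 1; abel
        _ ≤ _ := (norm_add_le _ _).trans (by linarith)
    have ht : Tendsto (fun n => f n q - f n p - (∑ j, DD j (f n) p • pr j) (q - p)) UF
        (𝓝 (ulim f q - ulim f p - L (q - p))) := by
      refine ((ulim_tendsto hf q).sub (ulim_tendsto hf p)).sub ?_
      simp only [hL, ContinuousLinearMap.sum_apply, ContinuousLinearMap.smul_apply, smul_eq_mul]
      exact tendsto_finset_sum _ fun j _ => (ulim_tendsto (hf.DD j) p).mul_const _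
    refine le_of_tendsto ht.abs (Eventually.of_forall fun n => ?_)
    exact taylor_of (fun k j q hq => hC n k j q hq) (by linarith) hqR
  have hO : (fun q => ulim f q - ulim f p - L (q - p)) =O[𝓝 p] fun q => ‖q - p‖ ^ 2 := by
    refine Asymptotics.IsBigO.of_bound (25 * C) ?_
    filter_upwards [Metric.closedBall_mem_nhds p one_pos] with q hq
    rw [mem_closedBall_iff_norm] at hq
    rw [norm_pow, norm_norm, Real.norm_eq_abs]
    exact (key q hq).trans (le_of_eq (by ring))
  have h0 := hO.hasFDerivAt (by norm_num : 1 < 2) (𝕜 := ℝ)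
  have h1 : HasFDerivAt (fun q => L (q - p)) L p :=
    L.hasFDerivAt.comp p ((hasFDerivAt_id p).sub_const p)
  have h2 := (h0.add h1).add_const (ulim f p)
  rw [zero_add] at h2
  refine h2.congr_of_eventuallyEq (Eventually.of_forall fun q => ?_)
  simp

lemma ulim_cd {f : ℕ → PA} (hf : Tame f) : ContDiff ℝ (⊤ : ℕ∞) (ulim f) := by
  refine cd_of_closed (fun g => ∃ f, Tame f ∧ g = ulim f) ?_ _ ⟨f, hf, rfl⟩
  rintro _ ⟨f, hf, rfl⟩
  exact ⟨fun j => ulim (fun n => DD j (f n)), fun j => ⟨_, hf.DD j, rfl⟩, ulim_hasFDeriv hf⟩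

def UL (f : ℕ → PA) (hf : Tame f) : PA := ⟨ulim f, ulim_cd hf, fun i hi p => by
  unfold ulim
  congr 1; ext n
  exact (f n).2.2 i hi p⟩

lemma UL_tendsto {f : ℕ → PA} (hf : Tame f) (p : E5) :
    Tendsto (fun n => f n p) UF (𝓝 (UL f hf p)) := ulim_tendsto hf p

lemma UL_DD {f : ℕ → PA} (hf : Tame f) (j : Fin 5) (p : E5) :
    Tendsto (fun n => DD j (f n) p) UF (𝓝 (DD j (UL f hf) p)) := by
  have : DD j (UL f hf) p = ulim (fun n => DD j (f n)) p := by
    rw [DD_apply]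
    change fderiv ℝ (ulim f) p (ee j) = _
    rw [(ulim_hasFDeriv hf p).fderiv]
    simp [pr_ee]
  rw [this]
  exact ulim_tendsto (hf.DD j) p

def LU (f : ℕ → PA) (g : PA) : Prop :=
  ∀ R δ : ℝ, 0 < δ → ∀ᶠ n in UF, ∀ p, ‖p‖ ≤ R → |f n p - g p| ≤ δ

lemma LU.JJ {f : ℕ → PA} {g : PA} (h : LU f g) (i : Fin 5) :
    LU (fun n => JJ i (f n)) (JJ i g) := by
  intro R δ hδ
  filter_upwards [h (R + 1) δ hδ] with n hn p hp
  have h1 := JJ_mono_at i (f := f n - g) (g := algebraMap ℝ PA δ) p R hp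
    (fun q hq => (abs_le.1 (hn q hq)).2)
  have h2 := JJ_mono_at i (g := f n - g) (f := algebraMap ℝ PA (-δ)) p R hp
    (fun q hq => (abs_le.1 (hn q hq)).1)
  rw [JJ_algebraMap, map_sub] at h1 h2
  exact abs_le.2 ⟨h2, h1⟩

lemma LU.tendsto {f : ℕ → PA} {g : PA} (h : LU f g) (p : E5) :
    Tendsto (fun n => f n p) UF (𝓝 (g p)) := by
  rw [Metric.tendsto_nhds]
  intro δ hδ
  filter_upwards [h ‖p‖ (δ / 2) (by linarith)] with n hn
  rw [Real.dist_eq]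
  linarith [hn p le_rfl]

lemma Tame.lu {f : ℕ → PA} (hf : Tame f) {g : PA}
    (hg : ∀ p, Tendsto (fun n => f n p) UF (𝓝 (g p))) : LU f g := by
  intro R δ hδ
  have hb : ∃ C, 0 < C ∧ ∀ n j q, ‖q‖ ≤ R → |_root_.DD j (f n) q| ≤ C := by
    choose c hc using fun j => (hf.DD j).pb R
    refine ⟨∑ j, |c j| + 1, by positivity, fun n j q hq => (hc j n q hq).trans ?_⟩
    have := Finset.single_le_sum (f := fun j => |c j|) (fun _ _ => abs_nonneg _)
      (Finset.mem_univ j)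
    linarith [le_abs_self (c j)]
  obtain ⟨C, hC0, hC⟩ := hb
  have hl : ∀ n p q, ‖p‖ ≤ R → ‖q‖ ≤ R → |f n q - f n p| ≤ 5 * C * ‖q - p‖ :=
    fun n p q hp hq => lip_of (fun j z hz => hC n j z hz) hp hq
  have hl' : ∀ p q, ‖p‖ ≤ R → ‖q‖ ≤ R → |g q - g p| ≤ 5 * C * ‖q - p‖ := fun p q hp hq =>
    le_of_tendsto ((hg q).sub (hg p)).abs (Eventually.of_forall fun n => hl n p q hp hq)
  set η := δ / (15 * C) with hη
  have hη0 : 0 < η := by positivity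
  obtain ⟨t, hts, htf, hcov⟩ := (isCompact_closedBall (0:E5) R).finite_cover_balls hη0
  have hev : ∀ᶠ n in UF, ∀ x ∈ t, |f n x - g x| ≤ δ / 3 := by
    rw [eventually_all_finite htf]
    intro x _
    have := (Metric.tendsto_nhds.1 (hg x)) (δ / 3) (by positivity)
    filter_upwards [this] with n hn
    rw [Real.dist_eq] at hn
    exact hn.le
  filter_upwards [hev] with n hn p hp
  have hpm := hcov (show p ∈ Metric.closedBall (0:E5) R by simpa using hp)
  simp only [Set.mem_iUnion] at hpm
  obtain ⟨x, hxt, hpx⟩ := hpm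
  rw [mem_ball_iff_norm] at hpx
  have hxR : ‖x‖ ≤ R := by simpa using hts hxt
  have e1 := hl n x p hxR hp
  have e2 := hl' x p hxR hp
  have e3 := hn x hxt
  have e4 : 5 * C * ‖p - x‖ ≤ δ / 3 := by
    have : 5 * C * ‖p - x‖ ≤ 5 * C * η := by gcongr
    refine this.trans (le_of_eq ?_)
    rw [hη]; field_simp; norm_num
  rw [abs_le] at *
  constructor <;> linarith

lemma Tame.II {f : ℕ → PA} (hf : Tame f) {g : PA}
    (hg : ∀ p, Tendsto (fun n => f n p) UF (𝓝 (g p))) (p : E5) :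
    Tendsto (fun n => II (f n) p) UF (𝓝 (II g p)) :=
  ((((hf.lu hg).JJ 4).JJ 3).JJ 2).tendsto p

lemma Tame.KK {f : ℕ → PA} (hf : Tame f) {g : PA}
    (hg : ∀ p, Tendsto (fun n => f n p) UF (𝓝 (g p))) (p : E5) :
    Tendsto (fun n => KK (f n) p) UF (𝓝 (KK g p)) :=
  (((hf.lu hg).JJ 4).JJ 3).tendsto p


lemma per_zero (g : ℝ → ℝ) (hc : Continuous g) (hp : ∀ s, g (s + 1) = g s)
    (h : ∀ k : ℤ, ∫ s in (0:ℝ)..1, trg k s * g s = 0) (s : ℝ) : g s = 0 := by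
  have hcos : ∀ n : ℤ, ∫ s in (0:ℝ)..1, Real.cos (2 * Real.pi * n * s) * g s = 0 := by
    intro n
    rcases le_or_gt 0 n with hn | hn
    · have := h n
      simpa [trg, hn] using this
    · have := h (-n)
      simpa [trg, hn.le] using this
  have hsin : ∀ n : ℤ, ∫ s in (0:ℝ)..1, Real.sin (2 * Real.pi * n * s) * g s = 0 := by
    intro n
    rcases lt_trichotomy n 0 with hn | hn | hn
    · have := h n
      simpa [trg, not_le.2 hn] using this
    · simp [hn]
    · have := h (-n)
      have h2 : ¬ (0 ≤ -n) := by omega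
      simp only [trg, h2, if_false] at this
      simpa using this
  have hper : Function.Periodic (fun s => (g s : ℂ)) 1 := fun s => by simp [hp]
  have hcc : Continuous (fun s => (g s : ℂ)) := Complex.continuous_ofReal.comp hc
  let G : C(AddCircle (1:ℝ), ℂ) := ⟨hper.lift, by
    exact (continuous_coinduced_dom.2 hcc)⟩
  have hG : ∀ s : ℝ, G (s : AddCircle (1:ℝ)) = g s := fun s => hper.lift_coe s
  have hF : ∀ n : ℤ, fourierCoeff G n = 0 := by
    intro n
    rw [fourierCoeff_eq_intervalIntegral _ n 0]
    have : ∀ x : ℝ, (fourier (-n) (x : AddCircle (1:ℝ))) • G (x : AddCircle (1:ℝ))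
        = ((Real.cos (2 * Real.pi * n * x) * g x : ℝ) : ℂ)
          - Complex.I * ((Real.sin (2 * Real.pi * n * x) * g x : ℝ) : ℂ) := by
      intro x
      rw [hG, fourier_coe_apply]
      have e : 2 * (Real.pi:ℂ) * Complex.I * ((-n : ℤ) : ℂ) * (x:ℂ) / ((1:ℝ):ℂ)
          = ((-(2 * Real.pi * n * x) : ℝ) : ℂ) * Complex.I := by
        push_cast; ring
      rw [e, Complex.exp_mul_I, ← Complex.ofReal_cos, ← Complex.ofReal_sin, Real.cos_neg,
        Real.sin_neg, smul_eq_mul]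
      push_cast; ring
    simp only [this]
    rw [zero_add, intervalIntegral.integral_sub, intervalIntegral.integral_const_mul,
      intervalIntegral.integral_ofReal, intervalIntegral.integral_ofReal, hcos, hsin]
    · simp
    · exact Continuous.intervalIntegrable (by fun_prop) _ _
    · exact Continuous.intervalIntegrable (by fun_prop) _ _
  have hS : Summable (fourierCoeff G) := by
    have : fourierCoeff G = fun _ => 0 := funext hF
    rw [this]; exact summable_zero
  have := has_pointwise_sum_fourier_series_of_summable hS (s : AddCircle (1:ℝ))
  simp only [hF, zero_smul] at this
  have h0 := this.unique hasSum_zero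
  rw [hG] at h0
  exact_mod_cast h0

lemma dens_line (i : Fin 5) (hi : 2 ≤ i) {f : PA} (h : ∀ k, JJ i (uu i k * f) = 0) : f = 0 := by
  ext p
  set p0 := p - pr i p • ee i with hp0
  have hpr : pr i p0 = 0 := by rw [hp0, map_sub, map_smul, pr_ee]; simp
  have hc : Continuous fun s : ℝ => f (p0 + s • ee i) := by
    have := pcont f
    fun_prop
  have := per_zero (fun s => f (p0 + s • ee i)) hc (fun s => by
      rw [add_smul, one_smul, ← add_assoc, f.2.2 i hi]) (fun k => by
      have h1 := congrArg (fun q : PA => q p0) (h k)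
      simp only [JJ_apply, PA_mul, uu_apply, pr_add_smul, hpr, if_true, zero_add] at h1
      exact h1) (pr i p)
  simpa [hp0] using this

lemma dens {f : PA} (h : ∀ k0 k1 k2, II (gg k0 k1 k2 * f) = 0) : f = 0 := by
  refine dens_line 4 (by decide) fun k2 => ?_
  refine dens_line 3 (by decide) fun k1 => ?_
  refine dens_line 2 (by decide) fun k0 => ?_
  have e : gg k0 k1 k2 * f = uu 2 k0 * (uu 3 k1 * (uu 4 k2 * f)) := by
    unfold gg; ring
  have := h k0 k1 k2
  rw [e, II_apply, KK_apply, JJ_const_mul 4 (uu_inv 2 4 (by decide) k0),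
    JJ_const_mul 4 (uu_inv 3 4 (by decide) k1), JJ_const_mul 3 (uu_inv 2 3 (by decide) k0)] at this
  exact this

lemma uu_zero (i : Fin 5) : uu i 0 = 1 := by
  ext p; simp [uu_apply, trg]

lemma exist_PA (a C1 C2 : PA) (ν : ℝ) (hν : 0 < ν) (ha : ∀ p, ν ≤ a p) :
    ∃ S : PA, KK S = 0 ∧ DD 2 S = DD 3 (a * DD 3 S + C1) + DD 4 (a * DD 4 S + C2) := by
  choose s hsW hs using galerkin_exists a C1 C2 ν hν ha
  have ht : Tame s := fun m =>
    (gal_bd a ν hν ha m s (fun _ => C1) (fun _ => C2) hsW hs (Bd.const C1) (Bd.const C2)).1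
  set S := UL s ht with hS
  have hK : KK S = 0 := by
    ext p
    have h1 := ht.KK (UL_tendsto ht) p
    simp only [KK_WN (hsW _)] at h1
    exact tendsto_nhds_unique h1 tendsto_const_nhds
  have hB : ∀ k0 k1 k2, (k1 ≠ 0 ∨ k2 ≠ 0) → BB a S C1 C2 (gg k0 k1 k2) = 0 := by
    intro k0 k1 k2 hk
    ext p
    set φ := gg k0 k1 k2 with hφ
    have hX : Tame (fun n => φ * DD 2 (s n) + DD 3 φ * (a * DD 3 (s n) + C1)
        + DD 4 φ * (a * DD 4 (s n) + C2)) :=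
      (((ht.DD 2).mul φ).add ((((ht.DD 3).mul a).add (Tame.const C1)).mul _)).add
        ((((ht.DD 4).mul a).add (Tame.const C2)).mul _)
    have hl := hX.II (g := φ * DD 2 S + DD 3 φ * (a * DD 3 S + C1)
        + DD 4 φ * (a * DD 4 S + C2)) (fun q => by
      simp only [PA_add, PA_mul]
      exact (((UL_DD ht 2 q).const_mul _).add
        ((((UL_DD ht 3 q).const_mul _).add_const _).const_mul _)).add
        ((((UL_DD ht 4 q).const_mul _).add_const _).const_mul _)) p
    have hev : ∀ᶠ n in UF, II (φ * DD 2 (s n) + DD 3 φ * (a * DD 3 (s n) + C1)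
        + DD 4 φ * (a * DD 4 (s n) + C2)) p = 0 := by
      have hat : ∀ᶠ n : ℕ in atTop, |k0| + |k1| + |k2| ≤ (n:ℤ) := by
        filter_upwards [eventually_ge_atTop (|k0| + |k1| + |k2|).toNat] with n hn
        omega
      rw [← Nat.cofinite_eq_atTop] at hat
      filter_upwards [(hyperfilter_le_cofinite : (UF : Filter ℕ) ≤ cofinite) hat] with n hn
      have := hs n φ (gg_mem (by have := abs_nonneg k1; have := abs_nonneg k2; omega)
        (by have := abs_nonneg k0; have := abs_nonneg k2; omega)
        (by have := abs_nonneg k1; have := abs_nonneg k0; omega) hk)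
      unfold BB at this
      have e : φ * DD 2 (s n) + DD 3 φ * (a * DD 3 (s n) + C1) + DD 4 φ * (a * DD 4 (s n) + C2)
        = DD 2 (s n) * φ + (a * DD 3 (s n) + C1) * DD 3 φ + (a * DD 4 (s n) + C2) * DD 4 φ := by
        ring
      rw [e, this]; rfl
    have h0 := tendsto_nhds_unique_of_eventuallyEq hl tendsto_const_nhds hev
    unfold BB
    have e : φ * DD 2 S + DD 3 φ * (a * DD 3 S + C1) + DD 4 φ * (a * DD 4 S + C2)
        = DD 2 S * φ + (a * DD 3 S + C1) * DD 3 φ + (a * DD 4 S + C2) * DD 4 φ := by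
        ring
    rw [e] at h0
    exact h0
  refine ⟨S, hK, ?_⟩
  rw [← sub_eq_zero]
  refine dens fun k0 k1 k2 => ?_
  by_cases hk : k1 ≠ 0 ∨ k2 ≠ 0
  · have := hB k0 k1 k2 hk
    set φ := gg k0 k1 k2
    unfold BB at this
    have e : φ * (DD 2 S - (DD 3 (a * DD 3 S + C1) + DD 4 (a * DD 4 S + C2)))
        = (DD 2 S * φ + (a * DD 3 S + C1) * DD 3 φ + (a * DD 4 S + C2) * DD 4 φ)
          - DD 3 ((a * DD 3 S + C1) * φ) - DD 4 ((a * DD 4 S + C2) * φ) := by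
      rw [DD_mul 3 (a * DD 3 S + C1), DD_mul 4 (a * DD 4 S + C2)]; ring
    rw [e, map_sub, map_sub, this, II_DD 3 (by decide), II_DD 4 (by decide)]
    simp
  · push Not at hk
    obtain ⟨rfl, rfl⟩ := hk
    rw [gg, uu_zero, uu_zero, mul_one, mul_one, II_apply, KK_mul (uu_inv 2 3 (by decide) k0)
      (uu_inv 2 4 (by decide) k0)]
    rw [map_sub, map_add, KK_DD3, KK_DD4, ← DD_KK, hK]
    simp


def Sol (a F1 F2 w : PA) : Prop :=
  KK w = 0 ∧ DD 2 w = DD 3 (a * DD 3 w + F1) + DD 4 (a * DD 4 w + F2)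

lemma Sol.bb {a F1 F2 w : PA} (h : Sol a F1 F2 w) (φ : PA) : BB a w F1 F2 φ = 0 := by
  unfold BB
  have e : DD 2 w * φ + (a * DD 3 w + F1) * DD 3 φ + (a * DD 4 w + F2) * DD 4 φ
      = DD 3 ((a * DD 3 w + F1) * φ) + DD 4 ((a * DD 4 w + F2) * φ) := by
    rw [DD_mul 3 (a * DD 3 w + F1), DD_mul 4 (a * DD 4 w + F2), h.2]; ring
  rw [e, map_add, II_DD 3 (by decide), II_DD 4 (by decide), add_zero]

lemma Sol.grad {a F1 F2 w : PA} (h : Sol a F1 F2 w) {ν : ℝ} (hν : 0 < ν) (ha : ∀ p, ν ≤ a p)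
    (p : E5) :
    II (DD 3 w * DD 3 w + DD 4 w * DD 4 w) p ≤ (ν ^ 2)⁻¹ * II (F1 * F1 + F2 * F2) p :=
  energy a w F1 F2 ν hν ha p (by rw [h.bb]; rfl)

lemma Sol.sup {a F1 F2 w : PA} (h : Sol a F1 F2 w) {ν : ℝ} (hν : 0 < ν) (ha : ∀ p, ν ≤ a p)
    (p : E5) :
    KK (w * w) p ≤ ((ν ^ 2)⁻¹ + (2 * ν)⁻¹) * II (F1 * F1 + F2 * F2) p := by
  have hD : DD 2 (KK (w * w)) = KK ((-2:ℝ) • (DD 3 w * (a * DD 3 w + F1))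
      + (-2:ℝ) • (DD 4 w * (a * DD 4 w + F2))) := by
    have e : DD 2 (w * w) = (-2:ℝ) • (DD 3 w * (a * DD 3 w + F1))
      + (-2:ℝ) • (DD 4 w * (a * DD 4 w + F2))
      + (2:ℝ) • (DD 3 (w * (a * DD 3 w + F1)) + DD 4 (w * (a * DD 4 w + F2))) := by
      rw [DD_mul 2, DD_mul 3 w (a * DD 3 w + F1), DD_mul 4 w (a * DD 4 w + F2), h.2]
      ext q
      simp only [PA_add, PA_mul, PA_smul]
      ring
    rw [DD_KK, e, map_add, map_smul _ (2:ℝ), map_add KK (DD 3 _), KK_DD3, KK_DD4]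
    simp
  have h1 := sup_line 2 (by decide) (KK (w * w)) (KK ((2 * ν)⁻¹ • (F1 * F1 + F2 * F2)))
    (fun q => by
      rw [hD]
      refine KK_mono (fun r => ?_) q
      simp only [PA_add, PA_mul, PA_smul]
      have key : ∀ x f : ℝ, -2 * (x * (a r * x + f)) ≤ (2 * ν)⁻¹ * (f * f) := by
        intro x f
        have h2 : (2 * ν)⁻¹ * (f * f) + 2 * (x * (ν * x + f)) = (2 * ν)⁻¹ * (2 * ν * x + f) ^ 2 := by
          field_simp; ring
        have h3 : 0 ≤ (2 * ν)⁻¹ * (2 * ν * x + f) ^ 2 := by positivity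
        nlinarith [mul_le_mul_of_nonneg_right (ha r) (mul_self_nonneg x)]
      have := key (DD 3 w r) (F1 r)
      have := key (DD 4 w r) (F2 r)
      linarith)
    (fun q => KK_nonneg (fun r => by
      simp only [PA_add, PA_mul, PA_smul]
      have := mul_self_nonneg (F1 r)
      have := mul_self_nonneg (F2 r)
      positivity) q) p
  rw [← II_apply, ← II_apply, map_smul, PA_smul] at h1
  have h2 := poinc_II w h.1 p
  have h3 := h.grad hν ha p
  linarith

lemma Sol.deriv {a F1 F2 w : PA} (h : Sol a F1 F2 w) (j : Fin 5) :
    Sol a (DD j F1 + DD j a * DD 3 w) (DD j F2 + DD j a * DD 4 w) (DD j w) := by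
  refine ⟨by rw [← DD_KK, h.1, map_zero], ?_⟩
  rw [DD_comm 2 j, h.2, map_add, DD_comm j 3, DD_comm j 4, map_add (DD j), map_add (DD j),
    DD_mul, DD_mul, DD_comm j 3 w, DD_comm j 4 w]
  congr 2 <;> ring

lemma Sol.uniq {a F1 F2 w v : PA} (h : Sol a F1 F2 w) (h' : Sol a F1 F2 v) {ν : ℝ} (hν : 0 < ν)
    (ha : ∀ p, ν ≤ a p) : w = v := by
  have hd : Sol a 0 0 (w - v) := by
    refine ⟨by rw [map_sub, h.1, h'.1, sub_zero], ?_⟩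
    rw [map_sub, h.2, h'.2]
    simp only [map_add, map_sub, mul_sub, add_zero]
    ring
  rw [← sub_eq_zero]
  ext p
  have h1 := hd.sup hν ha p
  have h2 : (w - v) p * (w - v) p = 0 :=
    KK_zero_of (g := (w - v) * (w - v)) (fun q => mul_self_nonneg _) (by simpa using h1)
  exact mul_self_eq_zero.1 h2

def c0 (γ ν : ℝ) : ℝ := (ν ^ 2)⁻¹ * (2 * γ ^ 2)

lemma sq_le_of_abs {x c : ℝ} (h : |x| ≤ c) : x * x ≤ c ^ 2 := by
  have := abs_nonneg x
  nlinarith [abs_mul_abs_self x]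

lemma II_le_const {f : PA} {c : ℝ} (h : ∀ p, f p ≤ c) (p) : II f p ≤ c := by
  have := II_mono (g := algebraMap ℝ PA c) h p
  rw [II_algebraMap] at this
  exact this

lemma Sol.G {a F1 F2 w : PA} (h : Sol a F1 F2 w) {γ ν : ℝ} (hν : 0 < ν) (ha : ∀ p, ν ≤ a p)
    (h1 : ∀ p, |F1 p| ≤ γ) (h2 : ∀ p, |F2 p| ≤ γ) (p) :
    II (DD 3 w * DD 3 w + DD 4 w * DD 4 w) p ≤ c0 γ ν := by
  refine (h.grad hν ha p).trans (mul_le_mul_of_nonneg_left (II_le_const (fun q => ?_) p)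
    (by positivity))
  have := sq_le_of_abs (h1 q)
  have := sq_le_of_abs (h2 q)
  simp only [PA_add, PA_mul]; linarith

def c1 (γ ν : ℝ) : ℝ := ((ν ^ 2)⁻¹ + (2 * ν)⁻¹) * (2 * γ ^ 2)

lemma Sol.est0 {a F1 F2 w : PA} (h : Sol a F1 F2 w) {γ ν : ℝ} (hν : 0 < ν) (ha : ∀ p, ν ≤ a p)
    (h1 : ∀ p, |F1 p| ≤ γ) (h2 : ∀ p, |F2 p| ≤ γ) (p) :
    KK (w * w) p ≤ c1 γ ν := by
  refine (h.sup hν ha p).trans (mul_le_mul_of_nonneg_left (II_le_const (fun q => ?_) p)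
    (by positivity))
  have := sq_le_of_abs (h1 q)
  have := sq_le_of_abs (h2 q)
  simp only [PA_add, PA_mul]; linarith

def c2 (γ ν : ℝ) : ℝ := ((ν ^ 2)⁻¹ + (2 * ν)⁻¹) * (4 + 2 * c0 γ ν)

lemma Sol.estD {a F1 F2 w : PA} (h : Sol a F1 F2 w) {γ ν δ : ℝ} (hν : 0 < ν) (ha : ∀ p, ν ≤ a p)
    (h1 : ∀ p, |F1 p| ≤ γ) (h2 : ∀ p, |F2 p| ≤ γ) (j : Fin 5)
    (d0 : ∀ p, |DD j a p| ≤ δ) (d1 : ∀ p, |DD j F1 p| ≤ δ) (d2 : ∀ p, |DD j F2 p| ≤ δ) (p) :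
    KK (DD j w * DD j w) p ≤ δ ^ 2 * c2 γ ν := by
  refine ((h.deriv j).sup hν ha p).trans ?_
  have e : δ ^ 2 * c2 γ ν = ((ν ^ 2)⁻¹ + (2 * ν)⁻¹) * (4 * δ ^ 2 + 2 * δ ^ 2 * c0 γ ν) := by
    unfold c2; ring
  rw [e]
  refine mul_le_mul_of_nonneg_left ?_ (by positivity)
  have hm := II_mono (g := algebraMap ℝ PA (4 * δ ^ 2)
    + (2 * δ ^ 2) • (DD 3 w * DD 3 w + DD 4 w * DD 4 w)) (f :=
      (DD j F1 + DD j a * DD 3 w) * (DD j F1 + DD j a * DD 3 w)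
      + (DD j F2 + DD j a * DD 4 w) * (DD j F2 + DD j a * DD 4 w)) (fun q => by
    simp only [PA_add, PA_mul, PA_smul, PA_algebraMap]
    have e0 := sq_le_of_abs (d0 q)
    have e1 := sq_le_of_abs (d1 q)
    have e2 := sq_le_of_abs (d2 q)
    nlinarith [sq_nonneg (DD j F1 q - DD j a q * DD 3 w q),
      sq_nonneg (DD j F2 q - DD j a q * DD 4 w q),
      mul_le_mul_of_nonneg_right e0 (mul_self_nonneg (DD 3 w q)),
      mul_le_mul_of_nonneg_right e0 (mul_self_nonneg (DD 4 w q))]) p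
  rw [map_add II (algebraMap ℝ PA _), II_algebraMap, map_smul, PA_add, PA_smul, PA_algebraMap] at hm
  have := mul_le_mul_of_nonneg_left (h.G hν ha h1 h2 p) (by positivity : 0 ≤ 2 * δ ^ 2)
  linarith

/-- the pointwise identity behind the estimates of `∂S/∂θ` and of `∇S` -/
lemma Sol.ident {a F1 F2 w : PA} (h : Sol a F1 F2 w) :
    DD 2 (a * (DD 3 w * DD 3 w + DD 4 w * DD 4 w)) =
      (DD 2 a * (DD 3 w * DD 3 w + DD 4 w * DD 4 w)
        - (2:ℝ) • (DD 2 w * DD 2 w - DD 2 w * (DD 3 F1 + DD 4 F2)))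
      + DD 3 ((2:ℝ) • (DD 2 w * (a * DD 3 w))) + DD 4 ((2:ℝ) • (DD 2 w * (a * DD 4 w))) := by
  have h2 : DD 2 w * DD 2 w = DD 2 w * (DD 3 (a * DD 3 w + F1) + DD 4 (a * DD 4 w + F2)) := by
    rw [← h.2]
  rw [h2]
  simp only [map_smul, map_add, DD_mul, DD_comm 2 3, DD_comm 2 4]
  ext q
  simp only [PA_add, PA_mul, PA_smul, PA_sub]
  ring

def c3 (γ ν : ℝ) : ℝ := γ * c0 γ ν + γ ^ 2

lemma Sol.est2 {a F1 F2 w : PA} (h : Sol a F1 F2 w) {γ ν : ℝ} (hν : 0 < ν) (ha : ∀ p, ν ≤ a p)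
    (hγ : 0 ≤ γ) (h1 : ∀ p, |F1 p| ≤ γ) (h2 : ∀ p, |F2 p| ≤ γ)
    (hd : ∀ p, |DD 3 F1 p + DD 4 F2 p| ≤ γ) (hat : ∀ p, |DD 2 a p| ≤ γ) (p) :
    II (DD 2 w * DD 2 w) p ≤ c3 γ ν := by
  have e := congrArg (fun f => II f p) h.ident
  simp only [II_DD 2 (by decide), map_add II _ (DD _ _), II_DD 3 (by decide), II_DD 4 (by decide),
    add_zero] at e
  have hm := II_mono (f := DD 2 w * DD 2 w
      + (DD 2 a * (DD 3 w * DD 3 w + DD 4 w * DD 4 w)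
        - (2:ℝ) • (DD 2 w * DD 2 w - DD 2 w * (DD 3 F1 + DD 4 F2))))
    (g := γ • (DD 3 w * DD 3 w + DD 4 w * DD 4 w) + algebraMap ℝ PA (γ ^ 2)) (fun q => by
      simp only [PA_add, PA_mul, PA_smul, PA_sub, PA_algebraMap]
      have e1 := sq_le_of_abs (hd q)
      have e2 := (abs_le.1 (hat q)).2
      nlinarith [sq_nonneg (DD 2 w q - (DD 3 F1 q + DD 4 F2 q)),
        mul_le_mul_of_nonneg_right e2 (mul_self_nonneg (DD 3 w q)),
        mul_le_mul_of_nonneg_right e2 (mul_self_nonneg (DD 4 w q))]) p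
  rw [map_add II (DD 2 w * DD 2 w), map_add II (γ • _), II_algebraMap, map_smul, PA_add, PA_add,
    PA_smul, PA_algebraMap, ← e] at hm
  have := mul_le_mul_of_nonneg_left (h.G hν ha h1 h2 p) hγ
  unfold c3
  simp only [PA_zero] at hm
  linarith

def c4 (γ ν : ℝ) : ℝ := ν⁻¹ * ((2 * γ + ν) * c0 γ ν + γ ^ 2)

lemma Sol.est3 {a F1 F2 w : PA} (h : Sol a F1 F2 w) {γ ν : ℝ} (hν : 0 < ν) (ha : ∀ p, ν ≤ a p)
    (ha' : ∀ p, a p ≤ γ + ν)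
    (hγ : 0 ≤ γ) (h1 : ∀ p, |F1 p| ≤ γ) (h2 : ∀ p, |F2 p| ≤ γ)
    (hd : ∀ p, |DD 3 F1 p + DD 4 F2 p| ≤ γ) (hat : ∀ p, |DD 2 a p| ≤ γ) (p) :
    KK (DD 3 w * DD 3 w + DD 4 w * DD 4 w) p ≤ c4 γ ν := by
  set g := DD 3 w * DD 3 w + DD 4 w * DD 4 w with hg
  have hg0 : ∀ q, 0 ≤ g q := fun q => add_nonneg (mul_self_nonneg _) (mul_self_nonneg _)
  have hs := sup_line 2 (by decide) (KK (a * g)) (KK (γ • g + algebraMap ℝ PA (γ ^ 2)))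
    (fun q => by
      rw [DD_KK, h.ident, map_add KK, map_add KK _ (DD 3 _), KK_DD3, KK_DD4, add_zero, add_zero]
      refine KK_mono (fun r => ?_) q
      rw [← hg]
      simp only [PA_add, PA_mul, PA_smul, PA_sub, PA_algebraMap]
      have e1 := sq_le_of_abs (hd r)
      have e2 := mul_le_mul_of_nonneg_right (abs_le.1 (hat r)).2 (hg0 r)
      nlinarith [sq_nonneg (2 * DD 2 w r - (DD 3 F1 r + DD 4 F2 r)),
        sq_nonneg (DD 3 F1 r + DD 4 F2 r)])
    (fun q => KK_nonneg (fun r => by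
      simp only [PA_add, PA_smul, PA_algebraMap]
      have := hg0 r
      positivity) q) p
  rw [← II_apply, ← II_apply, map_add, map_smul, II_algebraMap, PA_add, PA_smul,
    PA_algebraMap] at hs
  have hG := h.G hν ha h1 h2 p
  have m1 := II_mono (f := a * g) (g := (γ + ν) • g) (fun q => by
    simp only [PA_mul, PA_smul]
    exact mul_le_mul_of_nonneg_right (ha' q) (hg0 q)) p
  have m2 := KK_mono (g := a * g) (f := ν • g) (fun q => by
    simp only [PA_mul, PA_smul]
    exact mul_le_mul_of_nonneg_right (ha q) (hg0 q)) p
  rw [map_smul, PA_smul] at m1 m2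
  have m3 := mul_le_mul_of_nonneg_left hG hγ
  have m4 := mul_le_mul_of_nonneg_left hG (by positivity : 0 ≤ γ + ν)
  have m5 : ν * KK g p ≤ (2 * γ + ν) * c0 γ ν + γ ^ 2 := by linarith
  unfold c4
  rw [inv_mul_eq_div, le_div_iff₀ hν]
  linarith


lemma ee2 : ee 2 = (0, 0, 1, 0) := by simp [ee]
lemma ee3 : ee 3 = (0, 0, 0, (1, 0)) := by simp [ee]
lemma ee4 : ee 4 = (0, 0, 0, (0, 1)) := by simp [ee]
lemma ee0 : ee 0 = (1, 0, 0, 0) := by simp [ee]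
lemma ee1 : ee 1 = (0, 1, 0, 0) := by simp [ee]

lemma hd0 (f : PA) (t τ θ : ℝ) (x : ℝ × ℝ) :
    HasDerivAt (fun s => f (s, τ, θ, x)) (DD 0 f (t, τ, θ, x)) t := by
  have h := hasDeriv_line 0 f (0, τ, θ, x) t
  simpa [ee0] using h
lemma hd1 (f : PA) (t τ θ : ℝ) (x : ℝ × ℝ) :
    HasDerivAt (fun s => f (t, s, θ, x)) (DD 1 f (t, τ, θ, x)) τ := by
  have h := hasDeriv_line 1 f (t, 0, θ, x) τ
  simpa [ee1] using h
lemma hd2 (f : PA) (t τ θ : ℝ) (x : ℝ × ℝ) :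
    HasDerivAt (fun s => f (t, τ, s, x)) (DD 2 f (t, τ, θ, x)) θ := by
  have h := hasDeriv_line 2 f (t, τ, 0, x) θ
  simpa [ee2] using h

lemma hfx (f : PA) (t τ θ : ℝ) (x v : ℝ × ℝ) :
    fderiv ℝ (fun y : ℝ × ℝ => f (t, τ, θ, y)) x v = fderiv ℝ f (t, τ, θ, x) (0, 0, 0, v) := by
  have h1 : HasFDerivAt (fun y : ℝ × ℝ => ((t, τ, θ, y) : E5))
      ((0 : ℝ × ℝ →L[ℝ] ℝ).prod ((0 : ℝ × ℝ →L[ℝ] ℝ).prod ((0 : ℝ × ℝ →L[ℝ] ℝ).prod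
        (ContinuousLinearMap.id ℝ (ℝ × ℝ))))) x :=
    (hasFDerivAt_const _ _).prodMk ((hasFDerivAt_const _ _).prodMk
      ((hasFDerivAt_const _ _).prodMk (hasFDerivAt_id x)))
  have h2 := ((pdiff f) (t, τ, θ, x)).hasFDerivAt.comp x h1
  have h3 := h2.fderiv
  change fderiv ℝ (fun y : ℝ × ℝ => f (t, τ, θ, y)) x = _ at h3
  rw [h3]
  rfl

lemma hd3 (f : PA) (t τ θ : ℝ) (x : ℝ × ℝ) :
    fderiv ℝ (fun y : ℝ × ℝ => f (t, τ, θ, y)) x (1, 0) = DD 3 f (t, τ, θ, x) := by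
  rw [hfx, DD_apply, ee3]
lemma hd4 (f : PA) (t τ θ : ℝ) (x : ℝ × ℝ) :
    fderiv ℝ (fun y : ℝ × ℝ => f (t, τ, θ, y)) x (0, 1) = DD 4 f (t, τ, θ, x) := by
  rw [hfx, DD_apply, ee4]

lemma int_Icc (g : ℝ → ℝ) : ∫ s in Set.Icc (0:ℝ) 1, g s = ∫ s in (0:ℝ)..1, g s := by
  rw [integral_Icc_eq_integral_Ioc, intervalIntegral.integral_of_le zero_le_one]

lemma int_Tsq (f : PA) (t τ θ : ℝ) :
    ∫ x in Tsq, f (t, τ, θ, x) = KK f (t, τ, θ, (0, 0)) := by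
  have hf := pcont f
  have hi : IntegrableOn (fun x : ℝ × ℝ => f (t, τ, θ, x)) Tsq (volume.prod volume) :=
    (Continuous.continuousOn (by fun_prop)).integrableOn_compact
      (isCompact_Icc.prod isCompact_Icc)
  unfold Tsq at *
  rw [Measure.volume_eq_prod, setIntegral_prod _ hi]
  simp only [int_Icc, KK_apply, JJ_apply]
  simp [ee3, ee4]

lemma int_Icc_Tsq (f : PA) (t τ : ℝ) :
    ∫ θ in Set.Icc (0:ℝ) 1, ∫ x in Tsq, f (t, τ, θ, x) = II f (t, τ, 0, (0, 0)) := by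
  simp only [int_Tsq, int_Icc, II_apply, JJ_apply]
  simp [ee2]

lemma int_Tsq_sq (f : PA) (t τ θ : ℝ) :
    ∫ x in Tsq, f (t, τ, θ, x) ^ 2 = KK (f * f) (t, τ, θ, (0, 0)) := by
  rw [← int_Tsq]; simp only [PA_mul, pow_two]

lemma int_Icc_Tsq_sq (f : PA) (t τ : ℝ) :
    ∫ θ in Set.Icc (0:ℝ) 1, ∫ x in Tsq, f (t, τ, θ, x) ^ 2 = II (f * f) (t, τ, 0, (0, 0)) := by
  rw [← int_Icc_Tsq]; simp only [PA_mul, pow_two]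

lemma KK_base (f : PA) (t τ θ : ℝ) (x : ℝ × ℝ) :
    KK f (t, τ, θ, x) = KK f (t, τ, θ, (0, 0)) := by
  have e : ((t, τ, θ, x) : E5) = (t, τ, θ, (0, 0)) + x.1 • ee 3 + x.2 • ee 4 := by
    simp [ee3, ee4]
  rw [e, KK_apply, JJ_inv_of 4 3 (JJ_inv 4 (by decide) f), JJ_inv 3 (by decide)]

def mkPA (f : ℝ → ℝ → ℝ → (ℝ × ℝ) → ℝ)
    (h : ContDiff ℝ (⊤ : ℕ∞) (fun p : ℝ × ℝ × ℝ × (ℝ × ℝ) => f p.1 p.2.1 p.2.2.1 p.2.2.2))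
    (h2 : ∀ t τ θ x, f t τ (θ + 1) x = f t τ θ x) (h3 : ∀ t τ θ, SpacePeriodic (f t τ θ)) : PA :=
  ⟨fun p => f p.1 p.2.1 p.2.2.1 p.2.2.2, h, fun i hi p => by
    fin_cases i
    · exact absurd hi (by decide)
    · exact absurd hi (by decide)
    · change f (p + ee 2).1 (p + ee 2).2.1 (p + ee 2).2.2.1 (p + ee 2).2.2.2 = _
      simpa [ee2] using h2 p.1 p.2.1 p.2.2.1 p.2.2.2
    · change f (p + ee 3).1 (p + ee 3).2.1 (p + ee 3).2.2.1 (p + ee 3).2.2.2 = _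
      simpa [ee3] using (h3 p.1 p.2.1 p.2.2.1 p.2.2.2).1
    · change f (p + ee 4).1 (p + ee 4).2.1 (p + ee 4).2.2.1 (p + ee 4).2.2.2 = _
      simpa [ee4] using (h3 p.1 p.2.1 p.2.2.1 p.2.2.2).2⟩

lemma L2_le {f : ℝ × ℝ → ℝ} {c d : ℝ} (h : ∫ x in Tsq, f x ^ 2 ≤ c) (hd : √c ≤ d) :
    L2norm f ≤ d := by
  unfold L2norm
  rw [← Real.sqrt_eq_rpow]
  exact (Real.sqrt_le_sqrt h).trans hd

lemma LinfL2_le {f : ℝ → ℝ × ℝ → ℝ} {c d : ℝ} (h : ∀ θ, ∫ x in Tsq, f θ x ^ 2 ≤ c)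
    (hd : √c ≤ d) : LinfL2Norm f ≤ d := by
  unfold LinfL2Norm
  have : Nonempty (Set.Icc (0:ℝ) 1) := ⟨⟨0, by simp⟩⟩
  exact ciSup_le fun θ => L2_le (h θ) hd

lemma nuSol_iff (A C1 C2 : PA) (ν : ℝ) (w : PA) :
    Sol (A + algebraMap ℝ PA ν) C1 C2 w ↔
    ((∀ t τ θ (x : ℝ × ℝ), deriv (fun σ => w (t, τ, σ, x)) θ
      - div2 (fun y => (A (t, τ, θ, y) + ν) • grad (fun z => w (t, τ, θ, z)) y) x
        = div2 (fun y => (C1 (t, τ, θ, y), C2 (t, τ, θ, y))) x) ∧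
    (∀ t τ θ : ℝ, ∫ x in Tsq, w (t, τ, θ, x) = 0)) := by
  have e1 : ∀ t τ θ (x : ℝ × ℝ),
      div2 (fun y => (A (t, τ, θ, y) + ν) • grad (fun z => w (t, τ, θ, z)) y) x
      = (DD 3 ((A + algebraMap ℝ PA ν) * DD 3 w) + DD 4 ((A + algebraMap ℝ PA ν) * DD 4 w))
        (t, τ, θ, x) := by
    intro t τ θ x
    simp only [div2, grad, hd3, hd4]
    rw [PA_add, ← hd3, ← hd4]
    rfl
  have e2 : ∀ t τ θ (x : ℝ × ℝ), div2 (fun y => (C1 (t, τ, θ, y), C2 (t, τ, θ, y))) x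
      = (DD 3 C1 + DD 4 C2) (t, τ, θ, x) := by
    intro t τ θ x
    simp only [div2, hd3, hd4]
    rfl
  simp only [e1, e2, (hd2 _ _ _ _ _).deriv, int_Tsq]
  constructor
  · rintro ⟨hk, hs⟩
    refine ⟨fun t τ θ x => ?_, fun t τ θ => ?_⟩
    · rw [hs, map_add (DD 3), map_add (DD 4)]
      simp only [PA_add]; ring
    · rw [hk]; rfl
  · rintro ⟨hs, hk⟩
    refine ⟨?_, ?_⟩
    · ext ⟨t, τ, θ, x⟩
      rw [KK_base, hk]; rfl
    · ext ⟨t, τ, θ, x⟩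
      have := hs t τ θ x
      rw [map_add (DD 3), map_add (DD 4)]
      simp only [PA_add] at this ⊢
      linarith

theorem main_thm :
    ∀ γ ν : ℝ, 0 ≤ γ → 0 < ν → ∃ γ₃ : ℝ,
      ∀ (ε : ℝ) (A : ℝ → ℝ → ℝ → (ℝ × ℝ) → ℝ) (C : ℝ → ℝ → ℝ → (ℝ × ℝ) → ℝ × ℝ),
        0 < ε → ε ≤ 1 → CoeffBasic γ ε A C →
        ∃ S : ℝ → ℝ → ℝ → (ℝ × ℝ) → ℝ,
          IsNuCellSolP A C ν S ∧
          (∀ S', IsNuCellSolP A C ν S' → S' = S) ∧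
          ∀ t τ : ℝ,
            L2sharpNorm (fun θ x => deriv (fun σ => S t τ σ x) θ) ≤ γ₃ ∧
            LinfL2Norm (fun θ x => ‖grad (S t τ θ) x‖) ≤ γ₃ ∧
            LinfL2Norm (S t τ) ≤ γ₃ ∧
            LinfL2Norm (fun θ x => deriv (fun s => S s τ θ x) t) ≤ γ₃ ∧
            LinfL2Norm (fun θ x => deriv (fun s => S t s θ x) τ) ≤ Real.sqrt ε * γ₃ := by
  intro γ ν hγ hν
  refine ⟨√(c3 γ ν) + √(c4 γ ν) + √(c1 γ ν) + γ * √(c2 γ ν), ?_⟩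
  intro ε A C hε _ ⟨hA, hC, hA0, hper, hsp, H1, H2⟩
  have s1 := Real.sqrt_nonneg (c1 γ ν)
  have s2 := mul_nonneg hγ (Real.sqrt_nonneg (c2 γ ν))
  have s3 := Real.sqrt_nonneg (c3 γ ν)
  have s4 := Real.sqrt_nonneg (c4 γ ν)
  let a0 : PA := mkPA A hA (fun t τ θ x => (hper t τ θ x).2.1) (fun t τ θ => (hsp t τ θ).1)
  let C1 : PA := mkPA (fun t τ θ x => (C t τ θ x).1) hC.fst
    (fun t τ θ x => by rw [(hper t τ θ x).2.2.2])
    (fun t τ θ x => by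
      have := (hsp t τ θ).2 x
      exact ⟨congrArg Prod.fst this.1, congrArg Prod.fst this.2⟩)
  let C2 : PA := mkPA (fun t τ θ x => (C t τ θ x).2) hC.snd
    (fun t τ θ x => by rw [(hper t τ θ x).2.2.2])
    (fun t τ θ x => by
      have := (hsp t τ θ).2 x
      exact ⟨congrArg Prod.snd this.1, congrArg Prod.snd this.2⟩)
  have hCe : ∀ t τ θ x, C t τ θ x = (C1 (t, τ, θ, x), C2 (t, τ, θ, x)) := fun _ _ _ _ => rfl
  have hAe : ∀ t τ θ x, A t τ θ x = a0 (t, τ, θ, x) := fun _ _ _ _ => rfl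
  have k0 : ∀ t τ θ x, deriv (fun s => C s τ θ x) t
      = (DD 0 C1 (t, τ, θ, x), DD 0 C2 (t, τ, θ, x)) := fun t τ θ x =>
    ((hd0 C1 t τ θ x).prodMk (hd0 C2 t τ θ x)).deriv
  have k1 : ∀ t τ θ x, deriv (fun s => C t s θ x) τ
      = (DD 1 C1 (t, τ, θ, x), DD 1 C2 (t, τ, θ, x)) := fun t τ θ x =>
    ((hd1 C1 t τ θ x).prodMk (hd1 C2 t τ θ x)).deriv
  have a_0 : ∀ t τ θ x, deriv (fun s => A s τ θ x) t = DD 0 a0 (t, τ, θ, x) := fun t τ θ x =>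
    (hd0 a0 t τ θ x).deriv
  have a_1 : ∀ t τ θ x, deriv (fun s => A t s θ x) τ = DD 1 a0 (t, τ, θ, x) := fun t τ θ x =>
    (hd1 a0 t τ θ x).deriv
  have a_2 : ∀ t τ θ x, deriv (fun s => A t τ s x) θ = DD 2 a0 (t, τ, θ, x) := fun t τ θ x =>
    (hd2 a0 t τ θ x).deriv
  have dC : ∀ t τ θ x, div2 (C t τ θ) x = DD 3 C1 (t, τ, θ, x) + DD 4 C2 (t, τ, θ, x) :=
    fun t τ θ x => congrArg₂ (· + ·) (hd3 C1 t τ θ x) (hd4 C2 t τ θ x)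
  simp only [k0, k1, a_0, a_1, a_2, dC] at H1 H2
  set a : PA := a0 + algebraMap ℝ PA ν with ha
  have hDa : ∀ j, DD j a = DD j a0 := fun j => by rw [ha, map_add, DD_algebraMap, add_zero]
  have ha1 : ∀ p, ν ≤ a p := fun p => by
    have := hA0 p.1 p.2.1 p.2.2.1 p.2.2.2
    rw [hAe] at this
    simp only [ha, PA_add, PA_algebraMap]
    linarith
  have ha2 : ∀ p, a p ≤ γ + ν := fun p => by
    have := (abs_le.1 (H1 p.1 p.2.1 p.2.2.1 p.2.2.2).1).2
    rw [hAe] at this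
    simp only [ha, PA_add, PA_algebraMap]
    linarith
  have b1 : ∀ p, |C1 p| ≤ γ := fun p => (norm_fst_le _).trans (H1 p.1 p.2.1 p.2.2.1 p.2.2.2).2.1
  have b2 : ∀ p, |C2 p| ≤ γ := fun p => (norm_snd_le _).trans (H1 p.1 p.2.1 p.2.2.1 p.2.2.2).2.1
  have bd : ∀ p, |DD 3 C1 p + DD 4 C2 p| ≤ γ := fun p =>
    (H1 p.1 p.2.1 p.2.2.1 p.2.2.2).2.2.2.2.2.2.2.1
  have ba2 : ∀ p, |DD 2 a p| ≤ γ := fun p => by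
    rw [hDa]; exact (H1 p.1 p.2.1 p.2.2.1 p.2.2.2).2.2.2.2.1
  have ba0 : ∀ p, |DD 0 a p| ≤ γ := fun p => by
    rw [hDa]; exact (H1 p.1 p.2.1 p.2.2.1 p.2.2.2).2.2.1
  have bC10 : ∀ p, |DD 0 C1 p| ≤ γ := fun p =>
    (norm_fst_le _).trans (H1 p.1 p.2.1 p.2.2.1 p.2.2.2).2.2.2.1
  have bC20 : ∀ p, |DD 0 C2 p| ≤ γ := fun p =>
    (norm_snd_le _).trans (H1 p.1 p.2.1 p.2.2.1 p.2.2.2).2.2.2.1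
  have ba1 : ∀ p, |DD 1 a p| ≤ √ε * γ := fun p => by
    rw [hDa]; exact (H2 p.1 p.2.1 p.2.2.1 p.2.2.2).1
  have bC11 : ∀ p, |DD 1 C1 p| ≤ √ε * γ := fun p =>
    (norm_fst_le _).trans (H2 p.1 p.2.1 p.2.2.1 p.2.2.2).2.1
  have bC21 : ∀ p, |DD 1 C2 p| ≤ √ε * γ := fun p =>
    (norm_snd_le _).trans (H2 p.1 p.2.1 p.2.2.1 p.2.2.2).2.1
  obtain ⟨S, hS⟩ : ∃ S, Sol a C1 C2 S := exist_PA a C1 C2 ν hν ha1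
  have hS' := (nuSol_iff a0 C1 C2 ν S).1 hS
  refine ⟨fun t τ θ x => S (t, τ, θ, x), ⟨pcd S, fun t τ θ x => ?_, fun t τ θ x => ⟨?_, ?_⟩,
    hS'.1, hS'.2⟩, ?_, ?_⟩
  · have := S.2.2 2 (by decide) (t, τ, θ, x)
    refine Eq.trans (congrArg (S : E5 → ℝ) ?_) this
    simp [ee2]
  · have := S.2.2 3 (by decide) (t, τ, θ, x)
    refine Eq.trans (congrArg (S : E5 → ℝ) ?_) this
    simp [ee3]
  · have := S.2.2 4 (by decide) (t, τ, θ, x)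
    refine Eq.trans (congrArg (S : E5 → ℝ) ?_) this
    simp [ee4]
  · rintro S' ⟨q1, q2, q3, q4, q5⟩
    let w : PA := mkPA S' q1 q2 q3
    have hw : Sol a C1 C2 w := (nuSol_iff a0 C1 C2 ν w).2 ⟨q4, q5⟩
    have := hw.uniq hS hν ha1
    funext t τ θ x
    change w (t, τ, θ, x) = _
    rw [this]
  · intro t τ
    simp only [(hd2 _ _ _ _ _).deriv, (hd0 _ _ _ _ _).deriv, (hd1 _ _ _ _ _).deriv]
    refine ⟨?_, ?_, ?_, ?_, ?_⟩
    · unfold L2sharpNorm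
      rw [← Real.sqrt_eq_rpow]
      simp only [int_Icc_Tsq_sq]
      have h2 := Real.sqrt_le_sqrt (hS.est2 hν ha1 hγ b1 b2 bd ba2 (t, τ, 0, (0, 0)))
      linarith
    · refine LinfL2_le (c := c4 γ ν) (fun θ => ?_) (by linarith)
      refine le_trans ?_ (hS.est3 hν ha1 ha2 hγ b1 b2 bd ba2 (t, τ, θ, (0, 0)))
      rw [← int_Tsq]
      have c3' := pcont (DD 3 S)
      have c4' := pcont (DD 4 S)
      simp only [grad, hd3, hd4]
      refine setIntegral_mono_on ?_ ?_ (measurableSet_Icc.prod measurableSet_Icc) fun x _ => ?_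
      · exact (Continuous.continuousOn (by fun_prop)).integrableOn_compact
          (isCompact_Icc.prod isCompact_Icc)
      · simp only [PA_add, PA_mul]
        exact (Continuous.continuousOn (by fun_prop)).integrableOn_compact
          (isCompact_Icc.prod isCompact_Icc)
      · simp only [PA_add, PA_mul, Prod.norm_def, Real.norm_eq_abs]
        rcases max_choice |DD 3 S (t, τ, θ, x)| |DD 4 S (t, τ, θ, x)| with h | h <;>
          rw [h, sq_abs] <;>
          nlinarith [mul_self_nonneg (DD 3 S (t, τ, θ, x)), mul_self_nonneg (DD 4 S (t, τ, θ, x))]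
    · refine LinfL2_le (c := c1 γ ν) (fun θ => ?_) (by linarith)
      rw [int_Tsq_sq]
      exact hS.est0 hν ha1 b1 b2 _
    · refine LinfL2_le (c := γ ^ 2 * c2 γ ν) (fun θ => ?_) ?_
      · rw [int_Tsq_sq]
        exact hS.estD hν ha1 b1 b2 0 ba0 bC10 bC20 _
      · rw [Real.sqrt_mul (sq_nonneg _), Real.sqrt_sq hγ]; linarith
    · refine LinfL2_le (c := (√ε * γ) ^ 2 * c2 γ ν) (fun θ => ?_) ?_
      · rw [int_Tsq_sq]
        exact hS.estD hν ha1 b1 b2 1 ba1 bC11 bC21 _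
      · rw [Real.sqrt_mul (sq_nonneg _), Real.sqrt_sq (by positivity), mul_assoc]
        exact mul_le_mul_of_nonneg_left (by linarith) (Real.sqrt_nonneg _)

/-- Theorem 3.12: under (H1), (H2) and the periodicity of `Ã_ε` and `C̃_ε` in `τ`
and `θ`, for any `ν > 0` there exists a unique `θ`-periodic solution
`S^ν(t,τ,θ,x)` of `∂S/∂θ − ∇·((Ã_ε+ν)∇S) = ∇·C̃_ε` subject to the zero-mean
constraint `sup_θ |∫_{𝕋²} S^ν dx| = 0`; moreover there is a constant `γ₃`,
depending only on `γ` and `ν`, such that `‖∂S^ν/∂θ‖_{L²_#} ≤ γ₃`,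
`‖∇S^ν‖_{L^∞_#L²} ≤ γ₃`, `‖S^ν‖_{L^∞_#L²} ≤ γ₃`, `‖∂S^ν/∂t‖_{L^∞_#L²} ≤ γ₃` and
`‖∂S^ν/∂τ‖_{L^∞_#L²} ≤ √ε γ₃`. -/
theorem nu_cell_problem_wellposedness :
    ∀ γ ν : ℝ, 0 ≤ γ → 0 < ν → ∃ γ₃ : ℝ,
      ∀ (ε : ℝ) (A : ℝ → ℝ → ℝ → (ℝ × ℝ) → ℝ) (C : ℝ → ℝ → ℝ → (ℝ × ℝ) → ℝ × ℝ),
        0 < ε → ε ≤ 1 → CoeffBasic γ ε A C →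
        ∃ S : ℝ → ℝ → ℝ → (ℝ × ℝ) → ℝ,
          IsNuCellSolP A C ν S ∧
          (∀ S', IsNuCellSolP A C ν S' → S' = S) ∧
          ∀ t τ : ℝ,
            L2sharpNorm (fun θ x => deriv (fun σ => S t τ σ x) θ) ≤ γ₃ ∧
            LinfL2Norm (fun θ x => ‖grad (S t τ θ) x‖) ≤ γ₃ ∧
            LinfL2Norm (S t τ) ≤ γ₃ ∧
            LinfL2Norm (fun θ x => deriv (fun s => S s τ θ x) t) ≤ γ₃ ∧
            LinfL2Norm (fun θ x => deriv (fun s => S t s θ x) τ) ≤ Real.sqrt ε * γ₃ := main_thm
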